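/- arXiv:2010.01860 — 2 statements merged into one kernel-verified Lean document; each statement's English description precedes it below -/
import Mathlib

section
/- Let d = 3 and r = 1, and let σ₀, σ₁ be permutations of {1, 2, 3} such that one of them is a transposition and the other is a 3-cycle. For every irrational α ∈ (0,1) with bounded partial quotients, there exists an irrational β ∈ (0,1) with β ∉ ℤ + αℤ (in particular β ≠ 1 − α) such that the generalized Veech–Sataev system T built from α, the single marked point β, and the permutations σ₀, σ₁ is rigid with respect to every T-invariant Borel probability measure. -/
open MeasureTheory Filter Set
open scoped ENNReal symmDiff Classical

noncomputable section

/-! ### Generic measurable dynamics -/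

/-- `(X, T, μ)` is rigid: for some sequence `q n → ∞`, `μ (T^[q n] '' A ∆ A) → 0`
for every measurable set `A`. -/
def Rigid {X : Type*} [MeasurableSpace X] (T : X → X) (μ : Measure X) : Prop :=
  ∃ q : ℕ → ℕ, Tendsto q atTop atTop ∧
    ∀ A : Set X, MeasurableSet A →
      Tendsto (fun n => μ (((T^[q n]) '' A) ∆ A)) atTop (nhds 0)

/-- `T` is uniquely ergodic: it admits exactly one invariant Borel probability measure. -/
def UniquelyErgodicMap {X : Type*} [MeasurableSpace X] (T : X → X) : Prop :=
  ∃! μ : Measure X, IsProbabilityMeasure μ ∧ MeasurePreserving T μ μ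

/-- `(X, T, μ)` is of rank one. -/
def RankOne {X : Type*} [MeasurableSpace X] (T : X → X) (μ : Measure X) : Prop :=
  ∃ F : ℕ → Set X, ∃ h : ℕ → ℕ, (∀ n, 1 ≤ h n) ∧ (∀ n, MeasurableSet (F n)) ∧
    (∀ n, ∀ i < h n, ∀ j < h n, i ≠ j → Disjoint ((T^[i]) '' F n) ((T^[j]) '' F n)) ∧
    ∀ A : Set X, MeasurableSet A → ∀ ε : ℝ≥0∞, 0 < ε → ∃ n : ℕ, ∃ s : Finset ℕ, ∃ rem : Bool,
      (∀ i ∈ s, i < h n) ∧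
      μ (A ∆ ((⋃ i ∈ s, (T^[i]) '' F n) ∪
        (if rem then (⋃ i ∈ Finset.range (h n), (T^[i]) '' F n)ᶜ else (∅ : Set X)))) < ε

/-! ### Words, languages, symbolic systems -/

/-- `w` is a factor of `v`. -/
def IsFactor {A : Type*} (w v : List A) : Prop := ∃ u u' : List A, v = u ++ w ++ u'

/-- `L` is a language: nonempty, closed under factors, and every word extends to a longer one. -/
def IsLanguage {A : Type*} (L : Set (List A)) : Prop :=
  L.Nonempty ∧ (∀ v ∈ L, ∀ w : List A, IsFactor w v → w ∈ L) ∧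
    (∀ w ∈ L, ∃ v ∈ L, w.length < v.length ∧ IsFactor w v)

/-- `L` is linearly recurrent: for some `K`, every word of length `n` occurs in
every word of length at least `K n`. -/
def LinearlyRecurrent {A : Type*} (L : Set (List A)) : Prop :=
  ∃ K : ℕ, 1 ≤ K ∧ ∀ w ∈ L, ∀ v ∈ L, K * w.length ≤ v.length → IsFactor w v

/-- `L` is minimal. -/
def MinimalLang {A : Type*} (L : Set (List A)) : Prop :=
  ∀ w ∈ L, ∃ n : ℕ, ∀ v ∈ L, v.length = n → IsFactor w v

/-- The factor of a sequence starting at `i`, of length `s`. -/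
def wordAt {A : Type*} (x : ℕ → A) (i s : ℕ) : List A := List.ofFn fun j : Fin s => x (i + j)

/-- The subshift `X_L`: sequences all of whose finite factors lie in `L`. -/
def XL {A : Type*} (L : Set (List A)) : Set (ℕ → A) := {x | ∀ i s : ℕ, wordAt x i s ∈ L}

/-- The one-sided shift `S` on `X_L`. -/
def shiftXL {A : Type*} (L : Set (List A)) (x : XL L) : XL L :=
  ⟨fun n => x.1 (n + 1), fun i s => by
    have h := x.2 (i + 1) s
    have e : wordAt (fun n => x.1 (n + 1)) i s = wordAt x.1 (i + 1) s := by
      unfold wordAt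
      refine congrArg List.ofFn (funext fun j => congrArg x.1 ?_)
      omega
    rw [e]
    exact h⟩

/-- The cylinder `[w] ⊆ X_L` of a word `w`. -/
def langCylinder {A : Type*} (L : Set (List A)) (w : List A) : Set (XL L) :=
  {x | ∀ i : Fin w.length, x.1 i = w.get i}

/-- `e_n(S, μ)`: the smallest positive measure of a cylinder of a word of `L` of length `n`. -/
def cylMinMeasure {A : Type*} [MeasurableSpace A] (L : Set (List A))
    (μ : Measure (XL L)) (n : ℕ) : ℝ≥0∞ :=
  sInf {v : ℝ≥0∞ | ∃ w ∈ L, w.length = n ∧ v = μ (langCylinder L w) ∧ 0 < v}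

/-! ### Continued fraction data of `α` -/

/-- `ℤ + αℤ`. -/
def ZPlusAlphaZ (α : ℝ) : Set ℝ := {x | ∃ m k : ℤ, x = (m : ℝ) + (k : ℝ) * α}

/-- `(α_{n-1}, α_n)` computed by the Euclidean algorithm, with `α_{-1} = 1`, `α_0 = α`. -/
def cfPair (α : ℝ) : ℕ → ℝ × ℝ
  | 0 => (1, α)
  | n + 1 =>
    ((cfPair α n).2, (cfPair α n).1 - (⌊(cfPair α n).1 / (cfPair α n).2⌋ : ℝ) * (cfPair α n).2)

/-- `α_n = |q_n α - p_n|`. -/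
def alphaSeq (α : ℝ) (n : ℕ) : ℝ := (cfPair α n).2

/-- The partial quotient `a_n = ⌊α_{n-2} / α_{n-1}⌋` (meaningful for `n ≥ 1`). -/
def pq (α : ℝ) (n : ℕ) : ℕ := (⌊(cfPair α (n - 1)).1 / (cfPair α (n - 1)).2⌋).toNat

/-- `(q_{n-1}, q_n)`, with `q_{-1} = 0`, `q_0 = 1` and `q_{n+1} = a_{n+1} q_n + q_{n-1}`. -/
def qPair (α : ℝ) : ℕ → ℕ × ℕ
  | 0 => (0, 1)
  | n + 1 => ((qPair α n).2, pq α (n + 1) * (qPair α n).2 + (qPair α n).1)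

/-- `q_n`. -/
def qDen (α : ℝ) (n : ℕ) : ℕ := (qPair α n).2

/-- `α` has bounded partial quotients. -/
def BoundedPartialQuotients (α : ℝ) : Prop := ∃ C : ℕ, ∀ n : ℕ, 1 ≤ n → pq α n ≤ C

/-! ### Rokhlin towers for the rotation and Ostrowski digits -/

/-- `x` lies in the arc `[a, a + l)` modulo 1. -/
def inArc (x a l : ℝ) : Prop := ∃ m : ℤ, a ≤ x + m ∧ x + m < a + l

/-- Left endpoint of the basis `B_n` of the large `n`-tower. -/
def largeBase (α : ℝ) (n : ℕ) : ℝ :=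
  if Odd n then α - alphaSeq α (n - 1) + alphaSeq α n else α - alphaSeq α n

/-- Left endpoint of the basis `B'_n` of the small `n`-tower. -/
def smallBase (α : ℝ) (n : ℕ) : ℝ :=
  if Odd n then α - alphaSeq α (n - 1) else α + alphaSeq α (n - 1) - alphaSeq α n

/-- Membership in the basis `B_n` of the large `n`-tower. -/
def InLargeBase (α : ℝ) (n : ℕ) (x : ℝ) : Prop := inArc x (largeBase α n) (alphaSeq α (n - 1))

/-- Distance from `x` to the reference endpoint (left endpoint for `n` odd, right
endpoint for `n` even) of the level `k` of the large `n`-tower. -/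
def levelDist (α : ℝ) (n k : ℕ) (x : ℝ) : ℝ :=
  if Odd n then x - (largeBase α n + (k : ℝ) * α)
  else (largeBase α n + alphaSeq α (n - 1) + (k : ℝ) * α) - x

/-- `x` lies in column `(b)` of the large `n`-tower. -/
def InLargeColumn (α : ℝ) (n b : ℕ) (x : ℝ) : Prop :=
  ∃ k : ℕ, k < qDen α n ∧
    inArc (levelDist α n k x) ((b : ℝ) * alphaSeq α n)
      (if b = pq α (n + 1) then alphaSeq α (n - 1) - (pq α (n + 1) : ℝ) * alphaSeq α n
       else alphaSeq α n)

/-- `x` lies in the small `n`-tower. -/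
def InSmallTower (α : ℝ) (n : ℕ) (x : ℝ) : Prop :=
  ∃ k : ℕ, k < (qPair α n).1 ∧ inArc x (smallBase α n + (k : ℝ) * α) (alphaSeq α n)

/-- The Ostrowski digit `b_m(β)` (meaningful for `m ≥ 2`), read in the towers at stage `m - 1`:
it is `b` if `β` lies in column `(b)` of the large `(m-1)`-tower with `b ≥ 1`, and `0`
otherwise. -/
def ostB (α β : ℝ) (m : ℕ) : ℕ :=
  if h : ∃ b : ℕ, 1 ≤ b ∧ InLargeColumn α (m - 1) b β then h.choose else 0

/-! ### Isolation and clustering of marked points -/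

/-- The marked point `β_j` (with `β_j ≠ 1 - α`) is `(n, M)`-isolated. -/
def BetaIsolated {r : ℕ} (α : ℝ) (β : Fin r → ℝ) (j : Fin r) (n M : ℕ) : Prop :=
  (∃ m₁ : ℕ, n - M ≤ m₁ ∧ m₁ ≤ n ∧ ostB α (β j) m₁ ≠ pq α m₁ - 1) ∧
  (∃ m₂ : ℕ, n - M ≤ m₂ ∧ m₂ ≤ n ∧ Odd m₂ ∧ ostB α (β j) m₂ ≠ pq α m₂) ∧
  (∃ m₃ : ℕ, n - M ≤ m₃ ∧ m₃ ≤ n ∧ Even m₃ ∧ ostB α (β j) m₃ ≠ pq α m₃) ∧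
  ∀ i : Fin r, i ≠ j → β i ≠ 1 - α →
    ∃ m' : ℕ, n - M ≤ m' ∧ m' ≤ n ∧ ostB α (β j) m' ≠ ostB α (β i) m'

/-- The point `α` is `(n, M)`-isolated. -/
def AlphaIsolated {r : ℕ} (α : ℝ) (β : Fin r → ℝ) (n M : ℕ) : Prop :=
  ∀ i : Fin r, β i ≠ 1 - α →
    (∃ m : ℕ, n - M ≤ m ∧ m ≤ n ∧ ostB α (β i) m ≠ pq α m - 1) ∧
    (∃ m' : ℕ, n - M ≤ m' ∧ m' ≤ n ∧ Odd m' ∧ ostB α (β i) m' ≠ pq α m') ∧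
    (∃ m'' : ℕ, n - M ≤ m'' ∧ m'' ≤ n ∧ Even m'' ∧ ostB α (β i) m'' ≠ pq α m'')

/-- All the marked points `β_i` (with `β_i ≠ 1 - α`) cluster on `α`. -/
def ClusterOnAlpha {r : ℕ} (α : ℝ) (β : Fin r → ℝ) : Prop :=
  ∃ m N : ℕ → ℕ, Tendsto m atTop atTop ∧ Tendsto N atTop atTop ∧
    (∀ k : ℕ, m k + N k < m (k + 1)) ∧
    ∀ k : ℕ, ∀ i : Fin r, β i ≠ 1 - α →
      (∀ n, m k ≤ n → n ≤ m k + N k → ostB α (β i) n = pq α n - 1) ∨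
      (∀ n, m k ≤ n → n ≤ m k + N k → Even n → ostB α (β i) n = pq α n) ∨
      (∀ n, m k ≤ n → n ≤ m k + N k → Odd n → ostB α (β i) n = pq α n)

/-! ### The generalized Veech–Sataev system -/

instance : Fact ((0 : ℝ) < 1) := ⟨zero_lt_one⟩

/-- The representative in `[0, 1)` of a point of the circle `ℝ/ℤ`. -/
def circleRepr (x : AddCircle (1 : ℝ)) : ℝ := (AddCircle.equivIco 1 0 x).1

/-- The rotation `R` of angle `α` on the circle. -/
def rotMap (α : ℝ) : AddCircle (1 : ℝ) → AddCircle (1 : ℝ) := fun x => x + (α : AddCircle (1 : ℝ))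

/-- The index `j ∈ {0, …, r}` such that `β_j ≤ x < β_{j+1}` (with `β_0 = 0`,
`β_{r+1} = 1`), i.e. the number of marked points `≤ x`. -/
def atomIdx {r : ℕ} (β : Fin r → ℝ) (x : ℝ) : Fin (r + 1) :=
  ⟨(Finset.univ.filter fun i => β i ≤ x).card,
    Nat.lt_succ_of_le (le_trans (Finset.card_filter_le _ _) (by simp))⟩

/-- The permutation `σ(x)`. -/
def sigmaOf {r d : ℕ} (β : Fin r → ℝ) (σ : Fin (r + 1) → Equiv.Perm (Fin d)) (x : ℝ) :
    Equiv.Perm (Fin d) := σ (atomIdx β x)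

/-- The generalized Veech–Sataev map `T(x, s) = (Rx, σ(x) s)` on `(ℝ/ℤ) × {1, …, d}`. -/
def VST {r d : ℕ} (α : ℝ) (β : Fin r → ℝ) (σ : Fin (r + 1) → Equiv.Perm (Fin d)) :
    AddCircle (1 : ℝ) × Fin d → AddCircle (1 : ℝ) × Fin d :=
  fun p => (rotMap α p.1, sigmaOf β σ (circleRepr p.1) p.2)

/-- Standing conditions on the marked points `β_1 < … < β_r`. -/
def MarkedPointsCond {r : ℕ} (α : ℝ) (β : Fin r → ℝ) : Prop :=
  (∀ i : Fin r, Irrational (β i) ∧ 0 < β i ∧ β i < 1) ∧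
  StrictMono β ∧
  (∀ i : Fin r, β i ≠ 1 - α → β i ∉ ZPlusAlphaZ α) ∧
  (∀ i j : Fin r, i ≠ j → β i ≠ 1 - α → β j ≠ 1 - α → β i - β j ∉ ZPlusAlphaZ α)

/-- Adjacent permutations are distinct: `σ_j ≠ σ_{j+1}` for `0 ≤ j ≤ r - 1`. -/
def SigmaAdjacentCond {r d : ℕ} (σ : Fin (r + 1) → Equiv.Perm (Fin d)) : Prop :=
  ∀ j : Fin r, σ j.castSucc ≠ σ j.succ

/-- The minimality condition: no nonempty proper subset of `{1, …, d}` is invariant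
under all the `σ_i`. -/
def MinimalityCondition {r d : ℕ} (σ : Fin (r + 1) → Equiv.Perm (Fin d)) : Prop :=
  ¬ ∃ A : Set (Fin d), A.Nonempty ∧ A ≠ Set.univ ∧ ∀ j : Fin (r + 1), (σ j) '' A = A

/-- The product inequality. -/
def ProductInequality {r d : ℕ} (α : ℝ) (β : Fin r → ℝ)
    (σ : Fin (r + 1) → Equiv.Perm (Fin d)) : Prop :=
  (∀ t : Fin r, β t = 1 - α → σ (Fin.last r) * σ t.castSucc ≠ σ 0 * σ t.succ) ∧
  ((∀ i : Fin r, β i ≠ 1 - α) → σ (Fin.last r) ≠ σ 0)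

/-! ### Codings -/

/-- The letter read by the rotation with marked points at time `i`. -/
def rotCode {r : ℕ} (α : ℝ) (β : Fin r → ℝ) (x : AddCircle (1 : ℝ)) (i : ℕ) : Fin (r + 1) :=
  atomIdx β (circleRepr ((rotMap α)^[i] x))

/-- The language `L'` of the rotation with marked points `β_1, …, β_r`. -/
def LRot {r : ℕ} (α : ℝ) (β : Fin r → ℝ) : Set (List (Fin (r + 1))) :=
  {w | ∃ x : AddCircle (1 : ℝ), ∀ i : Fin w.length, w.get i = rotCode α β x i.1}

/-- The letter of the natural coding of `T` at a point. -/
def vsCode {r d : ℕ} (β : Fin r → ℝ) (p : AddCircle (1 : ℝ) × Fin d) : Fin (r + 1) × Fin d :=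
  (atomIdx β (circleRepr p.1), p.2)

/-- The language `L(T)` of the natural coding of the generalized Veech–Sataev system. -/
def LVST {r d : ℕ} (α : ℝ) (β : Fin r → ℝ) (σ : Fin (r + 1) → Equiv.Perm (Fin d)) :
    Set (List (Fin (r + 1) × Fin d)) :=
  {w | ∃ p : AddCircle (1 : ℝ) × Fin d,
    ∀ i : Fin w.length, w.get i = vsCode β ((VST α β σ)^[i.1] p)}

/-- Bounded runs: there is a bound on the number of consecutive integers satisfying `P`. -/
def BoundedRun (P : ℕ → Prop) : Prop :=
  ∃ B : ℕ, ∀ m : ℕ, ∃ n : ℕ, m ≤ n ∧ n ≤ m + B ∧ ¬ P n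

end


namespace VSProof

/-- one step of the cocycle -/
noncomputable def sg {G : Type*} (s0 s1 : G) (β x : ℝ) : G := if Int.fract x < β then s0 else s1

/-- the cocycle -/
noncomputable def SS {G : Type*} [Group G] (s0 s1 : G) (α β : ℝ) : ℕ → ℝ → G
  | 0, _ => 1
  | n + 1, x => sg s0 s1 β (x + n * α) * SS s0 s1 α β n x

section
variable {G : Type*} [Group G] (s0 s1 : G) (α β : ℝ)

lemma sg_add_int (x : ℝ) (m : ℤ) : sg s0 s1 β (x + m) = sg s0 s1 β x := by
  simp [sg]

lemma SS_add_int (n : ℕ) (x : ℝ) (m : ℤ) : SS s0 s1 α β n (x + m) = SS s0 s1 α β n x := by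
  induction n with
  | zero => rfl
  | succ n ih =>
    simp only [SS, ih]
    rw [show x + m + n * α = (x + n * α) + m by ring, sg_add_int]

lemma SS_add (m n : ℕ) (x : ℝ) :
    SS s0 s1 α β (m + n) x = SS s0 s1 α β m (x + n * α) * SS s0 s1 α β n x := by
  induction m with
  | zero => simp [SS]
  | succ m ih =>
    rw [show m + 1 + n = (m + n) + 1 by ring]
    simp only [SS, ih]
    rw [show x + ((m + n : ℕ) : ℝ) * α = x + n * α + m * α by push_cast; ring, mul_assoc]

lemma sg_floor (x : ℝ) : sg s0 s1 β x = if ⌊x - β⌋ < ⌊x⌋ then s0 else s1 := by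
  unfold sg
  congr 1
  rw [Int.floor_lt, Int.fract]
  apply propext
  constructor <;> intro h <;> linarith

lemma floor_near {a z δ : ℝ} (h : ∀ n : ℤ, δ < |a - n|) (hz : |z - a| ≤ δ) : ⌊z⌋ = ⌊a⌋ := by
  rw [Int.floor_eq_iff]
  have h1 := h ⌊a⌋
  have h2 := h (⌊a⌋ + 1)
  have h3 := Int.floor_le a
  have h4 := Int.lt_floor_add_one a
  rw [abs_of_nonneg (by linarith)] at h1
  push_cast at h2
  rw [abs_of_neg (by linarith)] at h2
  rw [abs_le] at hz
  constructor <;> linarith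

/-- `sg` is the same at two points with the same floors -/
lemma sg_congr {x y : ℝ} (h1 : ⌊x⌋ = ⌊y⌋) (h2 : ⌊x - β⌋ = ⌊y - β⌋) :
    sg s0 s1 β x = sg s0 s1 β y := by
  rw [sg_floor, sg_floor, h1, h2]

/-- separation of the first multiples of `α` from the integers -/
def Sep (k : ℕ) (δ : ℝ) : Prop := ∀ j : ℤ, j ≠ 0 → |j| ≤ k → ∀ m : ℤ, δ < |j * α - m|

lemma exists_sep (hα : Irrational α) (k : ℕ) : ∃ δ > 0, Sep α k δ := by
  have key : ∀ j : ℤ, j ≠ 0 → ∃ δ > 0, ∀ m : ℤ, δ < |j * α - m| := by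
    intro j hj
    have hirr : Irrational (j * α) := hα.intCast_mul hj
    have : 0 < |j * α - round (j * α)| := by
      rw [abs_pos, sub_ne_zero]
      exact hirr.ne_int _
    refine ⟨|j * α - round (j * α)| / 2, by linarith, fun m => ?_⟩
    have := round_le (j * α) m
    linarith
  choose! f hf using key
  let s : Finset ℤ := Finset.Icc (-(k : ℤ)) k
  have : ∃ δ > 0, ∀ j ∈ s, j ≠ 0 → δ ≤ f j := by
    induction s using Finset.induction_on with
    | empty => exact ⟨1, one_pos, by simp⟩
    | insert a s ha ih =>
      obtain ⟨δ, hδ, h⟩ := ih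
      by_cases h0 : a = 0
      · refine ⟨δ, hδ, fun j hj hj0 => ?_⟩
        rcases Finset.mem_insert.1 hj with rfl | hj
        · exact absurd h0 hj0
        · exact h j hj hj0
      · refine ⟨min δ (f a), lt_min hδ (hf a h0).1, fun j hj hj0 => ?_⟩
        rcases Finset.mem_insert.1 hj with rfl | hj
        · exact min_le_right _ _
        · exact (min_le_left _ _).trans (h j hj hj0)
  obtain ⟨δ, hδ, h⟩ := this
  refine ⟨δ, hδ, fun j hj hjk m => lt_of_le_of_lt (h j ?_ hj) ((hf j hj).2 m)⟩
  rw [Finset.mem_Icc]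
  exact abs_le.1 hjk

/-- `k` is good -/
def Good (k : ℕ) : Prop := 1 ≤ k ∧
  s1 * SS s0 s1 α (Int.fract (k * α)) (k - 1) α * s0 =
    s0 * SS s0 s1 α (Int.fract (k * α)) (k - 1) α * s1

lemma sep_fract {k : ℕ} {δ : ℝ} (hk : 1 ≤ k) (hsep : Sep α k δ) :
    δ < Int.fract (k * α) ∧ Int.fract (k * α) < 1 - δ := by
  have h1 := hsep k (by omega) (by simp) ⌊(k : ℝ) * α⌋
  have h2 := hsep k (by omega) (by simp) (⌊(k : ℝ) * α⌋ + 1)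
  have h3 := Int.floor_le ((k : ℝ) * α)
  have h4 := Int.lt_floor_add_one ((k : ℝ) * α)
  push_cast at h1 h2
  rw [abs_of_nonneg (by linarith)] at h1
  rw [abs_of_neg (by linarith)] at h2
  unfold Int.fract
  constructor <;> linarith

lemma sg_near {k : ℕ} {δ : ℝ} (hsep : Sep α k δ) {j : ℤ} (hj : 0 < j)
    (hjk : j < k) {z : ℝ} {m : ℤ} (hz : |z - (j * α + m)| ≤ δ) :
    sg s0 s1 (Int.fract (k * α)) z = sg s0 s1 (Int.fract (k * α)) (j * α) := by
  rw [← sg_add_int s0 s1 _ (j * α) m]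
  apply sg_congr
  · apply floor_near (δ := δ) _ hz
    intro n
    have := hsep j hj.ne' (by rw [abs_of_pos hj]; omega) (n - m)
    push_cast at this
    rwa [show (j : ℝ) * α + m - n = j * α - (n - m) by ring]
  · apply floor_near (δ := δ)
    · intro n
      have := hsep (j - k) (by omega) (by rw [abs_le]; constructor <;> omega)
        (n - m - ⌊(k : ℝ) * α⌋)
      push_cast at this
      unfold Int.fract
      rwa [show (j : ℝ) * α + m - (k * α - ⌊(k : ℝ) * α⌋) - n
        = (j - k) * α - (n - m - ⌊(k : ℝ) * α⌋) by ring]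
    · rwa [show z - Int.fract (k * α) - (j * α + m - Int.fract (k * α)) = z - (j * α + m) by ring]

lemma SS_eq_of_no_cross {k : ℕ} {δ : ℝ} (hgood : Good s0 s1 α k) (hsep : Sep α k δ)
    {x y : ℝ} (hxy : y - x ≤ δ) (hxy0 : x ≤ y) (Q : ℕ)
    (h1 : ∀ j : ℕ, 1 ≤ j → j ≤ k → ∀ m : ℤ, ¬ (x - j * α < m ∧ m ≤ y - j * α))
    (h2 : ∀ j : ℕ, 1 ≤ j → j ≤ k → ∀ m : ℤ,
      ¬ (x + Q * α - j * α < m ∧ m ≤ y + Q * α - j * α)) :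
    SS s0 s1 α (Int.fract (k * α)) Q x = SS s0 s1 α (Int.fract (k * α)) Q y := by
  obtain ⟨hk, hcomm⟩ := hgood
  obtain ⟨hb1, hb2⟩ := sep_fract α hk hsep
  set b := Int.fract ((k : ℝ) * α) with hb
  have hbk : b = k * α - ⌊(k : ℝ) * α⌋ := rfl
  let cross : ℤ → Prop := fun i => ∃ m : ℤ, x + i * α < m ∧ m ≤ y + i * α
  have floorEq : ∀ i : ℤ, ¬ cross i → ⌊x + i * α⌋ = ⌊y + i * α⌋ := by
    intro i hi
    have : ⌊y + i * α⌋ ≤ ⌊x + i * α⌋ := by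
      rw [Int.le_floor]
      by_contra hc
      exact hi ⟨⌊y + i * α⌋, not_le.1 hc, Int.floor_le _⟩
    exact le_antisymm (Int.floor_le_floor (by linarith)) this
  have fa : ∀ i : ℤ, ¬ cross i → ¬ cross (i - k) →
      sg s0 s1 b (x + i * α) = sg s0 s1 b (y + i * α) := by
    intro i h h'
    apply sg_congr _ _ _ (floorEq i h)
    have := floorEq _ h'
    have e : ∀ z : ℝ, z + i * α - b = z + ((i - k : ℤ) : ℝ) * α + (⌊(k : ℝ) * α⌋ : ℤ) := by
      intro z; rw [hbk]; push_cast; ring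
    rw [e, e, Int.floor_add_intCast, Int.floor_add_intCast, this]
  have fb : ∀ i j : ℤ, cross i → 0 < j → j < k →
      sg s0 s1 b (x + (i + j) * α) = sg s0 s1 b (j * α) ∧
      sg s0 s1 b (y + (i + j) * α) = sg s0 s1 b (j * α) := by
    rintro i j ⟨m, hm1, hm2⟩ hj hjk
    constructor
    · apply sg_near s0 s1 α hsep hj hjk (m := m)
      rw [abs_le]; constructor <;> linarith
    · apply sg_near s0 s1 α hsep hj hjk (m := m)
      rw [abs_le]; constructor <;> linarith
  have fc : ∀ i : ℤ, cross i → sg s0 s1 b (x + i * α) = s1 ∧ sg s0 s1 b (y + i * α) = s0 := by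
    rintro i ⟨m, hm1, hm2⟩
    have e1 : ⌊x + i * α⌋ = m - 1 := by
      rw [Int.floor_eq_iff]; push_cast; constructor <;> linarith
    have e2 : ⌊y + i * α⌋ = m := by
      rw [Int.floor_eq_iff]; constructor <;> linarith
    constructor
    · rw [sg, if_neg]
      rw [Int.fract, e1]; push_cast; linarith
    · rw [sg, if_pos]
      rw [Int.fract, e2]; linarith
  have fd : ∀ i : ℤ, cross i → sg s0 s1 b (x + (i + k) * α) = s0 ∧
      sg s0 s1 b (y + (i + k) * α) = s1 := by
    rintro i ⟨m, hm1, hm2⟩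
    have e1 : ⌊x + (i + k) * α⌋ = m + ⌊(k : ℝ) * α⌋ := by
      rw [Int.floor_eq_iff]; push_cast; constructor <;> linarith
    have e2 : ⌊y + (i + k) * α⌋ = m + ⌊(k : ℝ) * α⌋ := by
      rw [Int.floor_eq_iff]; push_cast; constructor <;> linarith
    constructor
    · rw [sg, if_pos]
      rw [Int.fract, e1]; push_cast; linarith
    · rw [sg, if_neg]
      rw [Int.fract, e2]; push_cast; linarith
  have noncross : ∀ i t : ℤ, cross i → 0 < t → t ≤ k → ¬ cross (i + t) := by
    rintro i t ⟨m, hm1, hm2⟩ ht htk ⟨m', hm1', hm2'⟩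
    have := hsep t ht.ne' (by rwa [abs_of_pos ht]) (m' - m)
    push_cast at this hm1' hm2'
    rw [lt_abs] at this
    rcases this with h | h <;> linarith
  have main : ∀ i : ℕ, i ≤ Q →
      (SS s0 s1 α b i x = SS s0 s1 α b i y ∧ ∀ j : ℤ, 1 ≤ j → j ≤ k → ¬ cross (i - j)) ∨
      (∃ i0 j : ℕ, ∃ c : G, i = i0 + 1 + j ∧ j + 1 ≤ k ∧ cross i0 ∧
        SS s0 s1 α b i x = SS s0 s1 α b j α * s1 * c ∧
        SS s0 s1 α b i y = SS s0 s1 α b j α * s0 * c) := by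
    intro i
    induction i with
    | zero =>
      intro _
      left
      refine ⟨rfl, ?_⟩
      rintro j hj hjk ⟨m, hm1, hm2⟩
      lift j to ℕ using by omega
      refine h1 j (by omega) (by omega) m ⟨?_, ?_⟩
      · push_cast at hm1; linarith
      · push_cast at hm2; linarith
    | succ i ih =>
      intro hiQ
      rcases ih (by omega) with ⟨he, hw⟩ | ⟨i0, j, c, hi, hj, hc, hx, hy⟩
      · by_cases hci : cross i
        · right
          refine ⟨i, 0, SS s0 s1 α b i x, rfl, by omega, hci, ?_, ?_⟩
          · simp only [SS, one_mul]
            have := (fc i hci).1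
            push_cast at this
            rw [this]
          · simp only [SS, one_mul]
            have := (fc i hci).2
            push_cast at this
            rw [this, he]
        · left
          constructor
          · have := fa i hci (hw k (by omega) le_rfl)
            push_cast at this
            simp only [SS, he, this]
          · intro j hj hjk
            by_cases hj1 : j = 1
            · subst hj1
              simpa using hci
            · have := hw (j - 1) (by omega) (by omega)
              rwa [show ((i + 1 : ℕ) : ℤ) - j = i - (j - 1) by push_cast; ring]
      · by_cases hjk : j + 1 < k
        · right
          refine ⟨i0, j + 1, c, by omega, by omega, hc, ?_, ?_⟩
          · have := (fb i0 (j + 1) hc (by omega) (by omega)).1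
            simp only [SS, hx]
            have e : x + (i : ℝ) * α = x + (((i0 : ℤ) : ℝ) + ((j + 1 : ℤ) : ℝ)) * α := by
              rw [hi]; push_cast; ring
            rw [e, this, mul_assoc, mul_assoc, mul_assoc]
            congr 2
            push_cast; ring
          · have := (fb i0 (j + 1) hc (by omega) (by omega)).2
            simp only [SS, hy]
            have e : y + (i : ℝ) * α = y + (((i0 : ℤ) : ℝ) + ((j + 1 : ℤ) : ℝ)) * α := by
              rw [hi]; push_cast; ring
            rw [e, this, mul_assoc, mul_assoc, mul_assoc]
            congr 2
            push_cast; ring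
        · left
          have hjk' : j = k - 1 := by omega
          constructor
          · simp only [SS, hx, hy]
            obtain ⟨hd1, hd2⟩ := fd i0 hc
            have hik : (i : ℝ) = ((i0 : ℤ) : ℝ) + k := by
              have : i = i0 + k := by omega
              rw [this]; push_cast; ring
            rw [hik, hd1, hd2, hjk', ← mul_assoc, ← mul_assoc, ← mul_assoc, ← mul_assoc, hcomm]
          · intro t ht htk
            have := noncross i0 (k + 1 - t) hc (by omega) (by omega)
            rwa [show ((i + 1 : ℕ) : ℤ) - t = i0 + (k + 1 - t) by omega]
  rcases main Q le_rfl with ⟨he, _⟩ | ⟨i0, j, c, hi, hj, hc, hx, hy⟩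
  · exact he
  · exfalso
    obtain ⟨m, hm1, hm2⟩ := hc
    have : (Q : ℝ) = i0 + 1 + j := by rw [hi]; push_cast; ring
    refine h2 (j + 1) (by omega) (by omega) m ⟨?_, ?_⟩
    · push_cast at *; rw [this]; linarith
    · push_cast at *; rw [this]; linarith

lemma SS_eq_of_far {k : ℕ} {δ : ℝ} (hgood : Good s0 s1 α k) (hsep : Sep α k δ)
    {x y : ℝ} (hxy : |y - x| ≤ δ) (Q : ℕ) (P : ℤ)
    (h : ∀ j : ℕ, 1 ≤ j → j ≤ k → ∀ m : ℤ, |y - x| + |Q * α - P| < |x - (j * α + m)|) :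
    SS s0 s1 α (Int.fract (k * α)) Q x = SS s0 s1 α (Int.fract (k * α)) Q y := by
  have a1 := abs_le.1 (le_refl |Q * α - P|)
  have a2 := abs_le.1 (le_refl |y - x|)
  rcases le_total x y with hle | hle
  · refine SS_eq_of_no_cross s0 s1 α hgood hsep (le_trans (le_abs_self _) hxy) hle Q ?_ ?_
    · rintro j hj hjk m ⟨hm1, hm2⟩
      have := h j hj hjk m
      rw [lt_abs] at this
      rcases this with h | h <;> linarith
    · rintro j hj hjk m ⟨hm1, hm2⟩
      have := h j hj hjk (m - P)
      push_cast at this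
      rw [lt_abs] at this
      rcases this with h | h <;> linarith
  · symm
    refine SS_eq_of_no_cross s0 s1 α hgood hsep
      (le_trans (by rw [abs_sub_comm]; exact le_abs_self _) hxy) hle Q ?_ ?_
    · rintro j hj hjk m ⟨hm1, hm2⟩
      have := h j hj hjk m
      rw [lt_abs] at this
      rcases this with h | h <;> linarith
    · rintro j hj hjk m ⟨hm1, hm2⟩
      have := h j hj hjk (m - P)
      push_cast at this
      rw [lt_abs] at this
      rcases this with h | h <;> linarith

end
end VSProof

namespace VSProof

/-- Farey pair -/
def FP (α : ℝ) (q : ℕ) (p : ℤ) (q' : ℕ) (p' : ℤ) : Prop :=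
  0 < q ∧ 0 < q' ∧ 0 < q * α - p ∧ q' * α - p' < 0 ∧
  ∀ i : ℕ, 0 < i → i < q + q' → ∀ m : ℤ, ¬ (q' * α - p' < i * α - m ∧ i * α - m < q * α - p)

lemma FP_step {α : ℝ} (hα : Irrational α) {q p q' p'} (h : FP α q p q' p') :
    FP α (q + q') (p + p') q' p' ∨ FP α q p (q + q') (p + p') := by
  obtain ⟨h1, h2, h3, h4, h5⟩ := h
  have hne : ((q + q' : ℕ) : ℝ) * α - ((p + p' : ℤ) : ℝ) ≠ 0 := by
    rw [sub_ne_zero]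
    exact (hα.natCast_mul (by omega)).ne_int _
  rcases lt_or_gt_of_ne hne with hlt | hgt
  · right
    refine ⟨h1, by omega, h3, hlt, ?_⟩
    rintro i hi hi' m ⟨ha, hb⟩
    by_cases hc : i < q + q'
    · refine h5 i hi hc m ⟨?_, hb⟩
      push_cast at ha; linarith
    · refine h5 (i - q) (by omega) (by omega) (m - p) ⟨?_, ?_⟩
      · rw [Nat.cast_sub (by omega)]; push_cast at *; linarith
      · rw [Nat.cast_sub (by omega)]; push_cast at *; linarith
  · left
    refine ⟨by omega, h2, hgt, h4, ?_⟩
    rintro i hi hi' m ⟨ha, hb⟩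
    by_cases hc : i < q + q'
    · refine h5 i hi hc m ⟨ha, ?_⟩
      push_cast at hb; linarith
    · refine h5 (i - q') (by omega) (by omega) (m - p') ⟨?_, ?_⟩
      · rw [Nat.cast_sub (by omega)]; push_cast at *; linarith
      · rw [Nat.cast_sub (by omega)]; push_cast at *; linarith

lemma FP_large {α : ℝ} (hα : Irrational α) (h0 : 0 < α) (h1 : α < 1) (N : ℕ) :
    ∃ q p q' p', FP α q p q' p' ∧ N ≤ q + q' := by
  induction N with
  | zero =>
    refine ⟨1, 0, 1, 1, ⟨by norm_num, by norm_num, by simpa using h0, by simpa using h1, ?_⟩,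
      by omega⟩
    rintro i hi hi' m ⟨ha, hb⟩
    have : i = 1 := by omega
    subst this
    push_cast at ha hb
    have h1 : (m : ℝ) < 1 := by linarith
    have h2 : (0 : ℝ) < m := by linarith
    have h1' : m < 1 := by exact_mod_cast h1
    have h2' : 0 < m := by exact_mod_cast h2
    omega
  | succ N ih =>
    obtain ⟨q, p, q', p', h, hN⟩ := ih
    have := h.1
    have := h.2.1
    rcases FP_step hα h with h' | h'
    · exact ⟨_, _, _, _, h', by omega⟩
    · exact ⟨_, _, _, _, h', by omega⟩

lemma exists_small {α : ℝ} (hα : Irrational α) {ε : ℝ} (hε : 0 < ε) :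
    ∃ i : ℕ, 0 < i ∧ ∃ m : ℤ, |i * α - m| < ε := by
  obtain ⟨n, hn⟩ := exists_nat_gt (1 / ε)
  have hnpos : 0 < n := by
    have : (0 : ℝ) < n := lt_trans (by positivity) hn
    exact_mod_cast this
  obtain ⟨k, hk, _, h⟩ := Real.exists_nat_abs_mul_sub_round_le α hnpos
  refine ⟨k, hk, _, lt_of_le_of_lt h ?_⟩
  rw [div_lt_iff₀ (by positivity)]
  rw [div_lt_iff₀ hε] at hn
  nlinarith

/-- from an approximation on one side get one on the other side -/
lemma exists_pos_neg {α : ℝ} (hα : Irrational α) {ε : ℝ} (hε : 0 < ε) :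
    (∃ i : ℕ, 0 < i ∧ ∃ m : ℤ, 0 < i * α - m ∧ i * α - m < ε) ∧
    (∃ i : ℕ, 0 < i ∧ ∃ m : ℤ, i * α - m < 0 ∧ -ε < i * α - m) := by
  obtain ⟨i, hi, m, hm⟩ := exists_small hα (lt_min hε one_pos)
  have hlt1 := hm.trans_le (min_le_left _ _)
  have hlt2 := hm.trans_le (min_le_right _ _)
  have hne : (i : ℝ) * α - m ≠ 0 := by
    rw [sub_ne_zero]; exact (hα.natCast_mul (by omega)).ne_int _
  rw [abs_lt] at hlt1 hlt2
  rcases lt_or_gt_of_ne hne with hlt | hgt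
  · refine ⟨?_, i, hi, m, hlt, hlt1.1⟩
    set t := m - (i : ℝ) * α with ht
    have htpos : 0 < t := by linarith
    have hfl : 1 ≤ ⌊1 / t⌋₊ := by
      rw [Nat.one_le_floor_iff, le_div_iff₀ htpos]; linarith
    have f1 := Nat.floor_le (show 0 ≤ 1 / t by positivity)
    have f2 := Nat.lt_floor_add_one (1 / t)
    rw [le_div_iff₀ htpos] at f1
    rw [div_lt_iff₀ htpos] at f2
    set j := ⌊1 / t⌋₊
    have hne' : ((j * i : ℕ) : ℝ) * α ≠ ((j * m - 1 : ℤ) : ℝ) :=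
      (hα.natCast_mul (Nat.mul_ne_zero (by omega) (by omega))).ne_int _
    have e : ((j * i : ℕ) : ℝ) * α - ((j * m - 1 : ℤ) : ℝ) = 1 - j * t := by
      rw [ht]; push_cast; ring
    rw [← sub_ne_zero, e] at hne'
    refine ⟨j * i, Nat.mul_pos (by omega) hi, j * m - 1, ?_⟩
    rw [e]
    exact ⟨lt_of_le_of_ne (by linarith) (Ne.symm hne'), by linarith⟩
  · refine ⟨⟨i, hi, m, hgt, hlt1.2⟩, ?_⟩
    set t := (i : ℝ) * α - m with ht
    have htpos : 0 < t := by linarith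
    have hfl : 1 ≤ ⌊1 / t⌋₊ := by
      rw [Nat.one_le_floor_iff, le_div_iff₀ htpos]; linarith
    have f1 := Nat.floor_le (show 0 ≤ 1 / t by positivity)
    have f2 := Nat.lt_floor_add_one (1 / t)
    rw [le_div_iff₀ htpos] at f1
    rw [div_lt_iff₀ htpos] at f2
    set j := ⌊1 / t⌋₊
    have hne' : ((j * i : ℕ) : ℝ) * α ≠ ((j * m + 1 : ℤ) : ℝ) :=
      (hα.natCast_mul (Nat.mul_ne_zero (by omega) (by omega))).ne_int _
    have e : ((j * i : ℕ) : ℝ) * α - ((j * m + 1 : ℤ) : ℝ) = j * t - 1 := by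
      rw [ht]; push_cast; ring
    rw [← sub_ne_zero, e] at hne'
    refine ⟨j * i, Nat.mul_pos (by omega) hi, j * m + 1, ?_⟩
    rw [e]
    exact ⟨lt_of_le_of_ne (by linarith) hne', by linarith⟩

lemma FP_small {α : ℝ} (hα : Irrational α) (h0 : 0 < α) (h1 : α < 1) {ε : ℝ} (hε : 0 < ε) :
    ∃ q p q' p', FP α q p q' p' ∧ q * α - p < ε ∧ -ε < q' * α - p' := by
  obtain ⟨⟨i, hi, m, hm1, hm2⟩, ⟨i', hi', m', hm1', hm2'⟩⟩ := exists_pos_neg hα hε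
  obtain ⟨q, p, q', p', h, hN⟩ := FP_large hα h0 h1 (i + i' + 1)
  refine ⟨q, p, q', p', h, ?_, ?_⟩
  · by_contra hc
    exact h.2.2.2.2 i hi (by omega) m ⟨by linarith [h.2.2.2.1], by linarith⟩
  · by_contra hc
    exact h.2.2.2.2 i' hi' (by omega) m' ⟨by linarith, by linarith [h.2.2.1]⟩

set_option maxRecDepth 10000 in
lemma perm_comm_cases : ∀ x y : Equiv.Perm (Fin 3), x * y = y * x →
    x = 1 ∨ y = 1 ∨ x * y = 1 ∨ (x * (x * y) = 1 ∧ x * y * y = 1) := by decide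

lemma perm_pow_six (x : Equiv.Perm (Fin 3)) : x ^ 6 = 1 := by
  have := pow_card_eq_one (x := x)
  rwa [Fintype.card_perm, Fintype.card_fin] at this

section
variable (s0 s1 : Equiv.Perm (Fin 3)) (α : ℝ)

lemma SS_zero_mul {k : ℕ} {δ : ℝ} (hgood : Good s0 s1 α k) (hsep : Sep α k δ)
    (q1 q2 : ℕ) (p1 p2 : ℤ) (h : |q1 * α - p1| + |q2 * α - p2| ≤ δ) :
    SS s0 s1 α (Int.fract (k * α)) (q1 + q2) 0 =
      SS s0 s1 α (Int.fract (k * α)) q1 0 * SS s0 s1 α (Int.fract (k * α)) q2 0 := by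
  rw [SS_add]
  congr 1
  rw [show (0 : ℝ) + q2 * α = (q2 * α - p2) + p2 by ring, SS_add_int]
  symm
  have a1 := abs_nonneg ((q1 : ℝ) * α - p1)
  refine SS_eq_of_far s0 s1 α hgood hsep (by rw [sub_zero]; linarith) q1 p1 ?_
  intro j hj hjk m
  have := hsep j (by omega) (by simpa using hjk) (-m)
  push_cast at this
  rw [sub_zero, zero_sub, abs_neg]
  rw [sub_neg_eq_add] at this
  linarith

/-- one-sided record -/
def Rec (α : ℝ) (q : ℕ) (p : ℤ) : Prop := 0 < q ∧
  ∀ i : ℕ, 0 < i → i < q → ∀ m : ℤ,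
    ¬ (0 < i * α - m ∧ i * α - m < q * α - p) ∧ ¬ (q * α - p < i * α - m ∧ i * α - m < 0)

lemma FP.rec_left {α : ℝ} {q p q' p'} (h : FP α q p q' p') : Rec α q p := by
  obtain ⟨h1, h2, h3, h4, h5⟩ := h
  refine ⟨h1, fun i hi hiq m => ⟨?_, ?_⟩⟩
  · rintro ⟨ha, hb⟩
    exact h5 i hi (by omega) m ⟨by linarith, hb⟩
  · rintro ⟨ha, hb⟩
    linarith

lemma FP.rec_right {α : ℝ} {q p q' p'} (h : FP α q p q' p') : Rec α q' p' := by
  obtain ⟨h1, h2, h3, h4, h5⟩ := h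
  refine ⟨h2, fun i hi hiq m => ⟨?_, ?_⟩⟩
  · rintro ⟨ha, hb⟩
    linarith
  · rintro ⟨ha, hb⟩
    exact h5 i hi (by omega) m ⟨ha, by linarith⟩

lemma exists_rec_one (hα : Irrational α) (h0 : 0 < α) (h1 : α < 1) {k : ℕ}
    (hgood : Good s0 s1 α k) {ε : ℝ} (hε : 0 < ε) :
    ∃ q p, Rec α q p ∧ |q * α - p| < ε ∧ SS s0 s1 α (Int.fract (k * α)) q 0 = 1 := by
  obtain ⟨δ, hδ, hsep⟩ := exists_sep α hα k
  obtain ⟨q, p, q', p', h, hv, hw⟩ := FP_small hα h0 h1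
    (show 0 < min (ε / 4) (δ / 4) by positivity)
  have hv1 := hv.trans_le (min_le_left _ _)
  have hv2 := hv.trans_le (min_le_right _ _)
  have hw1 : -(ε / 4) < q' * α - p' := by linarith [min_le_left (ε / 4) (δ / 4)]
  have hw2 : -(δ / 4) < q' * α - p' := by linarith [min_le_right (ε / 4) (δ / 4)]
  have hvp := h.2.2.1
  have hwn := h.2.2.2.1
  have av : |(q : ℝ) * α - p| = q * α - p := abs_of_pos hvp
  have aw : |(q' : ℝ) * α - p'| = -(q' * α - p') := abs_of_neg hwn
  have as' : |((q + q' : ℕ) : ℝ) * α - ((p + p' : ℤ) : ℝ)| ≤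
      (q * α - p) + -(q' * α - p') := by
    rw [abs_le]; push_cast; constructor <;> linarith
  set b := Int.fract ((k : ℝ) * α)
  have m1 := SS_zero_mul s0 s1 α hgood hsep q q' p p' (by linarith)
  have m2 := SS_zero_mul s0 s1 α hgood hsep q' q p' p (by linarith)
  have m3 := SS_zero_mul s0 s1 α hgood hsep q (q + q') p (p + p') (by linarith)
  have m4 := SS_zero_mul s0 s1 α hgood hsep (q + q') q' (p + p') p' (by linarith)
  rw [add_comm q' q, m1] at m2
  rcases perm_comm_cases _ _ m2 with hc | hc | hc | ⟨hc, hc'⟩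
  · exact ⟨q, p, h.rec_left, by linarith, hc⟩
  · exact ⟨q', p', h.rec_right, by linarith, hc⟩
  · rw [← m1] at hc
    rcases FP_step hα h with h' | h'
    · exact ⟨q + q', p + p', h'.rec_left, by linarith, hc⟩
    · exact ⟨q + q', p + p', h'.rec_right, by linarith, hc⟩
  · rw [← m1, ← m3] at hc
    rw [← m1, ← m4] at hc'
    have b3 : |((q + (q + q') : ℕ) : ℝ) * α - ((p + (p + p') : ℤ) : ℝ)| < ε := by
      rw [abs_lt]; push_cast; constructor <;> linarith
    have b4 : |((q + q' + q' : ℕ) : ℝ) * α - ((p + p' + p' : ℤ) : ℝ)| < ε := by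
      rw [abs_lt]; push_cast; constructor <;> linarith
    rcases FP_step hα h with h' | h'
    · rcases FP_step hα h' with h'' | h''
      · exact ⟨_, _, h''.rec_left, b4, hc'⟩
      · exact ⟨_, _, h''.rec_right, b4, hc'⟩
    · rcases FP_step hα h' with h'' | h''
      · exact ⟨_, _, h''.rec_left, b3, hc⟩
      · exact ⟨_, _, h''.rec_right, b3, hc⟩

lemma rigid_times (hα : Irrational α) {k : ℕ}
    (hgood : Good s0 s1 α k) {ε : ℝ} (hε : 0 < ε) (N : ℕ) :
    ∃ (Q : ℕ) (P : ℤ), N ≤ Q ∧ |Q * α - P| < ε ∧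
      ∀ x : ℝ, (∀ j : ℕ, 1 ≤ j → j ≤ k → ∀ m : ℤ, ε < |x - (j * α + m)|) →
        SS s0 s1 α (Int.fract (k * α)) Q x = 1 := by
  obtain ⟨δ, hδ, hsep⟩ := exists_sep α hα k
  obtain ⟨δ', hδ', hsep'⟩ := exists_sep α hα N
  obtain ⟨q, hq, p, hp⟩ := exists_small hα
    (show 0 < min (ε / 8) (min (δ / 8) δ') by positivity)
  have hp1 := hp.trans_le (min_le_left _ _)
  have hp2 := hp.trans_le ((min_le_right _ _).trans (min_le_left _ _))
  have hp3 := hp.trans_le ((min_le_right _ _).trans (min_le_right _ _))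
  have hqN : N ≤ q := by
    by_contra hc
    have := hsep' q (by omega) (by simp; omega) p
    push_cast at this
    linarith
  refine ⟨6 * q, 6 * p, by omega, ?_, ?_⟩
  · push_cast
    rw [show 6 * (q : ℝ) * α - 6 * p = 6 * (q * α - p) by ring, abs_mul]
    norm_num
    linarith [abs_nonneg ((q : ℝ) * α - p)]
  · intro x hx
    have key : ∀ i : ℕ, i ≤ 6 → SS s0 s1 α (Int.fract (k * α)) (i * q) x =
        (SS s0 s1 α (Int.fract (k * α)) q x) ^ i := by
      intro i
      induction i with
      | zero => intro _; simp [SS]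
      | succ i ih =>
        intro hi
        rw [show (i + 1) * q = q + i * q by ring, SS_add, ih (by omega), pow_succ']
        congr 1
        rw [show x + ((i * q : ℕ) : ℝ) * α = (x + i * (q * α - p)) + ((i * p : ℤ) : ℝ) by
          push_cast; ring, SS_add_int]
        symm
        have hi6 : (i : ℝ) ≤ 6 := by exact_mod_cast (by omega : i ≤ 6)
        have e : |x + i * (q * α - p) - x| ≤ 6 * |q * α - p| := by
          rw [show x + i * (q * α - p) - x = i * (q * α - p) by ring, abs_mul, Nat.abs_cast]
          exact mul_le_mul_of_nonneg_right hi6 (abs_nonneg _)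
        refine SS_eq_of_far s0 s1 α hgood hsep (by linarith) q p ?_
        intro j hj hjk m
        have := hx j hj hjk m
        linarith
    rw [key 6 le_rfl, perm_pow_six]

lemma sg_eq_of_not_between {G : Type*} (s0 s1 : G) {b b' x : ℝ}
    (h : ¬ (b ≤ Int.fract x ∧ Int.fract x < b')) (h' : ¬ (b' ≤ Int.fract x ∧ Int.fract x < b)) :
    sg s0 s1 b x = sg s0 s1 b' x := by
  unfold sg
  split_ifs with h1 h2 h2
  · rfl
  · exact absurd ⟨not_lt.1 h2, h1⟩ h'
  · exact absurd ⟨not_lt.1 h1, h2⟩ h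
  · rfl

lemma SS_congr {G : Type*} [Group G] (s0 s1 : G) {b b' x y : ℝ} (n : ℕ)
    (h : ∀ i : ℕ, i < n → sg s0 s1 b (x + i * α) = sg s0 s1 b' (y + i * α)) :
    SS s0 s1 α b n x = SS s0 s1 α b' n y := by
  induction n with
  | zero => rfl
  | succ n ih =>
    simp only [SS]
    rw [ih (fun i hi => h i (by omega)), h n (by omega)]

lemma good_next (hα : Irrational α) (h0 : 0 < α) (h1 : α < 1) {k : ℕ}
    (hgood : Good s0 s1 α k) {ε : ℝ} (hε : 0 < ε) :
    ∃ k', Good s0 s1 α k' ∧ Int.fract (k' * α) ≠ Int.fract (k * α) ∧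
      |Int.fract (k' * α) - Int.fract (k * α)| < ε := by
  obtain ⟨δ, hδ, hsep⟩ := exists_sep α hα k
  obtain ⟨q, p, ⟨hq, hrec⟩, hsm, hone⟩ := exists_rec_one s0 s1 α hα h0 h1 hgood
    (show 0 < min ε δ by positivity)
  have hs1 := hsm.trans_le (min_le_left _ _)
  have hs2 := hsm.trans_le (min_le_right _ _)
  obtain ⟨hk, hcomm⟩ := hgood
  obtain ⟨hb1, hb2⟩ := sep_fract α hk hsep
  set b := Int.fract ((k : ℝ) * α) with hb
  have hbk : b = k * α - ⌊(k : ℝ) * α⌋ := rfl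
  have hne : (q : ℝ) * α - p ≠ 0 := by
    rw [sub_ne_zero]; exact (hα.natCast_mul (by omega)).ne_int _
  set η := (q : ℝ) * α - p with hη
  have hs2' := abs_lt.1 hs2
  have hb' : Int.fract (((k + q : ℕ) : ℝ) * α) = b + η := by
    rw [Int.fract_eq_iff]
    refine ⟨by linarith, by linarith, ⌊(k : ℝ) * α⌋ + p, ?_⟩
    rw [hbk, hη]; push_cast; ring
  -- position of the orbit relative to `b`
  have pos : ∀ j : ℤ, 0 < j → j < k + q → j ≠ k → ∀ m : ℤ,
      ¬ (0 ≤ (j - k) * α - m ∧ (j - k) * α - m < η) ∧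
      ¬ (η ≤ (j - k) * α - m ∧ (j - k) * α - m < 0) := by
    intro j hj hjk hjne m
    rcases lt_or_gt_of_ne hjne with hlt | hgt
    · have := hsep (j - k) (by omega) (by rw [abs_le]; constructor <;> omega) m
      push_cast at this
      rw [lt_abs] at this
      constructor
      · rintro ⟨ha, hb⟩
        rcases this with h | h <;> linarith
      · rintro ⟨ha, hb⟩
        rcases this with h | h <;> linarith
    · obtain ⟨i, hi⟩ : ∃ i : ℕ, j - k = i := ⟨(j - k).toNat, by omega⟩
      have hi' : ((j : ℝ) - k) = i := by exact_mod_cast hi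
      rw [hi']
      have := hrec i (by omega) (by omega) m
      have hne0 : (i : ℝ) * α - m ≠ 0 := by
        rw [sub_ne_zero]; exact (hα.natCast_mul (by omega)).ne_int _
      have hneη : (i : ℝ) * α - m ≠ η := by
        intro h
        have : (((q : ℤ) - i : ℤ) : ℝ) * α = ((p - m : ℤ) : ℝ) := by
          push_cast; rw [hη] at h; linarith
        exact (hα.intCast_mul (by omega)).ne_int _ this
      constructor
      · rintro ⟨ha, hb⟩
        exact this.1 ⟨lt_of_le_of_ne ha (Ne.symm hne0), hb⟩
      · rintro ⟨ha, hb⟩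
        exact this.2 ⟨lt_of_le_of_ne ha (Ne.symm hneη), hb⟩
  have fr : ∀ j : ℤ, Int.fract ((j : ℝ) * α) - b =
      (j - k) * α - ((⌊(j : ℝ) * α⌋ - ⌊(k : ℝ) * α⌋ : ℤ) : ℝ) := by
    intro j; rw [hbk, Int.fract]; push_cast; ring
  have sgeq : ∀ j : ℤ, 0 < j → j < k + q → j ≠ k →
      sg s0 s1 (b + η) (j * α) = sg s0 s1 b (j * α) := by
    intro j hj hjk hjne
    have := pos j hj hjk hjne (⌊(j : ℝ) * α⌋ - ⌊(k : ℝ) * α⌋)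
    rw [← fr] at this
    apply sg_eq_of_not_between
    · rintro ⟨ha, hb⟩
      exact this.2 ⟨by linarith, by linarith⟩
    · rintro ⟨ha, hb⟩
      exact this.1 ⟨by linarith, by linarith⟩
  have sg0 : sg s0 s1 b 0 = s0 := by
    rw [sg, if_pos]; rw [Int.fract_zero]; linarith
  have sgk : sg s0 s1 b (k * α) = s1 := by
    rw [sg, if_neg]; exact lt_irrefl _
  -- the orbit segment of length k - 1 starting at α + η
  have segW : SS s0 s1 α b (k - 1) (α + η) = SS s0 s1 α b (k - 1) α := by
    apply SS_congr
    intro i hi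
    have := sg_near s0 s1 α hsep (j := i + 1) (by omega) (by omega)
      (z := α + η + i * α) (m := 0) (by
        push_cast
        rw [show α + η + i * α - ((i + 1) * α + 0) = η by ring]; exact hs2.le)
    rw [this]; congr 1; push_cast; ring
  have split1 : ∀ x, SS s0 s1 α b k x = SS s0 s1 α b (k - 1) (α + x) * sg s0 s1 b x := by
    intro x
    have := SS_add s0 s1 α b (k - 1) 1 x
    rw [Nat.sub_add_cancel hk] at this
    rw [this]
    simp [SS, add_comm]
  set W := SS s0 s1 α b (k - 1) α with hW
  refine ⟨k + q, ⟨by omega, ?_⟩, ?_, ?_⟩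
  · rw [hb']
    have tot : SS s0 s1 α b (k + q) 0 = SS s0 s1 α b k η := by
      rw [SS_add, hone, mul_one, show (0 : ℝ) + q * α = η + p by rw [hη]; ring, SS_add_int]
    rw [split1 η, segW] at tot
    rcases lt_or_gt_of_ne hne with hlt | hgt
    · have e1 : SS s0 s1 α (b + η) (k + q - 1) α = SS s0 s1 α b (k + q - 1) α := by
        apply SS_congr
        intro i hi
        rw [show α + i * α = ((i + 1 : ℤ) : ℝ) * α by push_cast; ring]
        by_cases hik : (i + 1 : ℤ) = k
        · rw [hik]
          apply sg_eq_of_not_between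
          · rintro ⟨ha, hb⟩
            push_cast at hb
            exact lt_irrefl _ hb
          · rintro ⟨ha, hb⟩
            push_cast at hb
            linarith
        · exact sgeq _ (by omega) (by omega) hik
      have e2 : SS s0 s1 α b (k + q) 0 = SS s0 s1 α b (k + q - 1) α * s0 := by
        have := SS_add s0 s1 α b (k + q - 1) 1 0
        rw [Nat.sub_add_cancel (by omega)] at this
        rw [this]
        simp [SS, sg0]
      have e3 : sg s0 s1 b η = s1 := by
        rw [sg, if_neg]
        have : Int.fract η = η + 1 := by
          rw [Int.fract_eq_iff]
          exact ⟨by linarith, by linarith, -1, by push_cast; ring⟩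
        rw [this]; linarith
      rw [e2, e3] at tot
      rw [e1, eq_mul_inv_of_mul_eq tot]
      calc s1 * (W * s1 * s0⁻¹) * s0 = s1 * W * s0 * s0⁻¹ * s1 := by group
        _ = s0 * W * s1 * s0⁻¹ * s1 := by rw [hcomm]
        _ = s0 * (W * s1 * s0⁻¹) * s1 := by group
    · have e0 : SS s0 s1 α (b + η) (k - 1) α = W := by
        apply SS_congr
        intro i hi
        rw [show α + i * α = ((i + 1 : ℤ) : ℝ) * α by push_cast; ring]
        exact sgeq _ (by omega) (by omega) (by omega)
      have e1 : SS s0 s1 α (b + η) (q - 1) (α + k * α) = SS s0 s1 α b (q - 1) (α + k * α) := by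
        apply SS_congr
        intro i hi
        rw [show α + k * α + i * α = ((i + 1 + k : ℤ) : ℝ) * α by push_cast; ring]
        exact sgeq _ (by omega) (by omega) (by omega)
      have e2 : SS s0 s1 α (b + η) (k + q - 1) α =
          SS s0 s1 α b (q - 1) (α + k * α) * s0 * W := by
        rw [show k + q - 1 = (q - 1) + (1 + (k - 1)) by omega, SS_add, SS_add, e0]
        rw [show α + ((1 + (k - 1) : ℕ) : ℝ) * α = α + k * α by
          rw [show 1 + (k - 1) = k by omega], e1, mul_assoc]
        congr 2
        simp only [SS, mul_one]
        rw [show α + ((k - 1 : ℕ) : ℝ) * α + ((0 : ℕ) : ℝ) * α = k * α by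
          rw [Nat.cast_sub hk]; push_cast; ring]
        rw [sg, if_pos]; linarith
      have e3 : sg s0 s1 b η = s0 := by
        rw [sg, if_pos]
        have : Int.fract η = η := by
          rw [Int.fract_eq_iff]
          exact ⟨by linarith, by linarith, 0, by push_cast; ring⟩
        rw [this]; linarith
      have e4 : SS s0 s1 α b (k + q) 0 =
          SS s0 s1 α b (q - 1) (α + k * α) * s1 * (W * s0) := by
        rw [show k + q = (q - 1) + (1 + k) by omega, SS_add, SS_add, split1 0, sg0, add_zero]
        rw [show (0 : ℝ) + ((1 + k : ℕ) : ℝ) * α = α + k * α by push_cast; ring, mul_assoc]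
        congr 2
        simp only [SS, mul_one]
        rw [← sgk]; congr 1; push_cast; ring
      rw [e4, e3] at tot
      have e5 : SS s0 s1 α b (q - 1) (α + k * α) = s1⁻¹ := by
        have := mul_eq_right.1 tot
        exact eq_inv_of_mul_eq_one_left this
      rw [e2, e5]
      calc s1 * (s1⁻¹ * s0 * W) * s0 = s0 * s1⁻¹ * (s1 * W * s0) := by group
        _ = s0 * s1⁻¹ * (s0 * W * s1) := by rw [hcomm]
        _ = s0 * (s1⁻¹ * s0 * W) * s1 := by group
  · rw [hb']; intro h; exact hne (by linarith)
  · rw [hb', add_sub_cancel_left]; exact hs1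

lemma sg_pos {G : Type*} (s0 s1 : G) {b x : ℝ} (m : ℤ) (h0 : m ≤ x) (h : x < m + b) (h1 : b ≤ 1) :
    sg s0 s1 b x = s0 := by
  rw [sg, if_pos]
  have : ⌊x⌋ = m := by rw [Int.floor_eq_iff]; constructor <;> linarith
  rw [Int.fract, this]; linarith

lemma sg_neg {G : Type*} (s0 s1 : G) {b x : ℝ} (m : ℤ) (h0 : m + b ≤ x) (h : x < m + 1)
    (h1 : 0 ≤ b) : sg s0 s1 b x = s1 := by
  rw [sg, if_neg]
  have : ⌊x⌋ = m := by rw [Int.floor_eq_iff]; constructor <;> linarith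
  rw [Int.fract, this]; linarith

lemma fract_of {x : ℝ} (m : ℤ) (h0 : m ≤ x) (h : x < m + 1) : Int.fract x = x - m := by
  have : ⌊x⌋ = m := by rw [Int.floor_eq_iff]; constructor <;> linarith
  rw [Int.fract, this]

lemma perm_base : ∀ s c : Equiv.Perm (Fin 3), s * s = 1 → c * (c * c) = 1 → s * c * s = c * c →
    c * s * c = s ∧ s * (c * c) * c = c * (c * c) * s := by decide

lemma exists_good (h0 : 0 < α) (h1 : α < 1) (hα : Irrational α)
    (hs : (s0 * s0 = 1 ∧ s1 * (s1 * s1) = 1 ∧ s0 * s1 * s0 = s1 * s1) ∨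
      (s1 * s1 = 1 ∧ s0 * (s0 * s0) = 1 ∧ s1 * s0 * s1 = s0 * s0)) :
    ∃ k, Good s0 s1 α k := by
  have h12 : α ≠ 1 / 2 := by
    have := hα.ne_rat (1 / 2); push_cast at this; exact this
  have h13 : α ≠ 1 / 3 := by
    have := hα.ne_rat (1 / 3); push_cast at this; exact this
  have h23 : α ≠ 2 / 3 := by
    have := hα.ne_rat (2 / 3); push_cast at this; exact this
  rcases lt_or_gt_of_ne h12 with hl | hg
  · rcases hs with ⟨hss, hcc, hrel⟩ | ⟨hss, hcc, hrel⟩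
    · refine ⟨2, by norm_num, ?_⟩
      have f : Int.fract (((2 : ℕ) : ℝ) * α) = 2 * α := by
        rw [fract_of 0] <;> push_cast <;> linarith
      rw [f]
      have a1 : sg s0 s1 (2 * α) α = s0 := by
        apply sg_pos s0 s1 0 <;> push_cast <;> linarith
      simp [SS, a1, mul_assoc, hss]
    · rcases lt_or_gt_of_ne h13 with hl3 | hg3
      · refine ⟨3, by norm_num, ?_⟩
        have f : Int.fract (((3 : ℕ) : ℝ) * α) = 3 * α := by
          rw [fract_of 0] <;> push_cast <;> linarith
        rw [f]
        have a1 : sg s0 s1 (3 * α) α = s0 := by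
          apply sg_pos s0 s1 0 <;> push_cast <;> linarith
        have a2 : sg s0 s1 (3 * α) (α + α) = s0 := by
          apply sg_pos s0 s1 0 <;> push_cast <;> linarith
        have := (perm_base s1 s0 hss hcc hrel).2
        simpa [SS, a1, a2] using this
      · refine ⟨4, by norm_num, ?_⟩
        have f : Int.fract (((4 : ℕ) : ℝ) * α) = 4 * α - 1 := by
          rw [fract_of 1] <;> push_cast <;> linarith
        rw [f]
        have a1 : sg s0 s1 (4 * α - 1) α = s0 := by
          apply sg_pos s0 s1 0 <;> push_cast <;> linarith
        have a2 : sg s0 s1 (4 * α - 1) (α + α) = s1 := by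
          apply sg_neg s0 s1 0 <;> push_cast <;> linarith
        have a3 : sg s0 s1 (4 * α - 1) (α + 2 * α) = s0 := by
          apply sg_pos s0 s1 1 <;> push_cast <;> linarith
        have := (perm_base s1 s0 hss hcc hrel).1
        simp only [SS, Nat.add_one_sub_one, Nat.cast_ofNat, Nat.cast_one, Nat.cast_zero, zero_mul,
          one_mul, add_zero, a1, a2, a3, mul_one]
        rw [show s0 * (s1 * s0) = s1 by rw [← mul_assoc, this]]
        rw [hss, one_mul, mul_assoc, hss, mul_one]
  · rcases hs with ⟨hss, hcc, hrel⟩ | ⟨hss, hcc, hrel⟩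
    · rcases lt_or_gt_of_ne h23 with hl3 | hg3
      · refine ⟨4, by norm_num, ?_⟩
        have f : Int.fract (((4 : ℕ) : ℝ) * α) = 4 * α - 2 := by
          rw [fract_of 2] <;> push_cast <;> linarith
        rw [f]
        have a1 : sg s0 s1 (4 * α - 2) α = s1 := by
          apply sg_neg s0 s1 0 <;> push_cast <;> linarith
        have a2 : sg s0 s1 (4 * α - 2) (α + α) = s0 := by
          apply sg_pos s0 s1 1 <;> push_cast <;> linarith
        have a3 : sg s0 s1 (4 * α - 2) (α + 2 * α) = s1 := by
          apply sg_neg s0 s1 1 <;> push_cast <;> linarith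
        have := (perm_base s0 s1 hss hcc hrel).1
        simp only [SS, Nat.add_one_sub_one, Nat.cast_ofNat, Nat.cast_one, Nat.cast_zero, zero_mul,
          one_mul, add_zero, a1, a2, a3, mul_one]
        rw [show s1 * (s0 * s1) = s0 by rw [← mul_assoc, this]]
        rw [hss, one_mul, mul_assoc, hss, mul_one]
      · refine ⟨3, by norm_num, ?_⟩
        have f : Int.fract (((3 : ℕ) : ℝ) * α) = 3 * α - 2 := by
          rw [fract_of 2] <;> push_cast <;> linarith
        rw [f]
        have a1 : sg s0 s1 (3 * α - 2) α = s1 := by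
          apply sg_neg s0 s1 0 <;> push_cast <;> linarith
        have a2 : sg s0 s1 (3 * α - 2) (α + α) = s1 := by
          apply sg_neg s0 s1 1 <;> push_cast <;> linarith
        have := (perm_base s0 s1 hss hcc hrel).2
        simpa [SS, a1, a2] using this.symm
    · refine ⟨2, by norm_num, ?_⟩
      have f : Int.fract (((2 : ℕ) : ℝ) * α) = 2 * α - 1 := by
        rw [fract_of 1] <;> push_cast <;> linarith
      rw [f]
      have a1 : sg s0 s1 (2 * α - 1) α = s1 := by
        apply sg_neg s0 s1 0 <;> push_cast <;> linarith
      simp [SS, a1, mul_assoc, hss]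

end
end VSProof

namespace VSProof

section
variable (σ₀ σ₁ : Equiv.Perm (Fin 3)) (α β : ℝ)

lemma VST_coe (x : ℝ) (s : Fin 3) :
    VST α ![β] ![σ₀, σ₁] ((x : AddCircle (1 : ℝ)), s) =
      (((x + α : ℝ) : AddCircle (1 : ℝ)), sg σ₀ σ₁ β x s) := by
  have hr : circleRepr (x : AddCircle (1 : ℝ)) = Int.fract x := by
    unfold circleRepr
    rw [AddCircle.coe_equivIco_mk_apply]
    simp
  have hs : sigmaOf ![β] ![σ₀, σ₁] (Int.fract x) = sg σ₀ σ₁ β x := by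
    unfold sigmaOf sg
    by_cases h : Int.fract x < β
    · rw [if_pos h]
      have : atomIdx ![β] (Int.fract x) = 0 := by
        apply Fin.ext
        simp [atomIdx, h]
      rw [this]; rfl
    · rw [if_neg h]
      have : atomIdx ![β] (Int.fract x) = 1 := by
        apply Fin.ext
        simp [atomIdx, not_lt.1 h]
      rw [this]; rfl
  unfold VST rotMap
  simp only [hr, hs, AddCircle.coe_add]

lemma VST_iter (n : ℕ) (x : ℝ) (s : Fin 3) :
    (VST α ![β] ![σ₀, σ₁])^[n] ((x : AddCircle (1 : ℝ)), s) =
      (((x + n * α : ℝ) : AddCircle (1 : ℝ)), SS σ₀ σ₁ α β n x s) := by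
  induction n with
  | zero => simp [SS]
  | succ n ih =>
    rw [Function.iterate_succ_apply', ih, VST_coe]
    simp only [SS, Equiv.Perm.mul_apply]
    congr 2
    push_cast; ring

lemma VST_inj : Function.Injective (VST α ![β] ![σ₀, σ₁]) := by
  rintro ⟨a, s⟩ ⟨b, t⟩ h
  unfold VST rotMap at h
  simp only [Prod.mk.injEq] at h
  obtain ⟨h1, h2⟩ := h
  have : a = b := add_right_cancel h1
  subst this
  simpa using h2

/-- rigidity criterion at stage `N` -/
def Crit (N : ℕ) : Prop :=
  ∃ (Q : ℕ) (P : ℤ), N ≤ Q ∧ |Q * α - P| < 1 / ((N : ℝ) + 1) ∧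
    ∃ K : Set (AddCircle (1 : ℝ)), MeasurableSet K ∧
      volume K ≤ ENNReal.ofReal (1 / ((N : ℝ) + 1)) ∧
      ∀ x : ℝ, (x : AddCircle (1 : ℝ)) ∉ K → SS σ₀ σ₁ α β Q x = 1

instance : IsProbabilityMeasure (volume : Measure (AddCircle (1 : ℝ))) :=
  ⟨by rw [AddCircle.measure_univ]; simp⟩

lemma unique_rot {α : ℝ} (hα : Irrational α) (ν : Measure (AddCircle (1 : ℝ)))
    [IsProbabilityMeasure ν] (h : MeasurePreserving (rotMap α) ν ν) : ν = volume := by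
  have hz : ∀ n : ℤ, MeasurePreserving (fun x => x + n • (α : AddCircle (1 : ℝ))) ν ν := by
    have hn : ∀ n : ℕ, MeasurePreserving (fun x => x + n • (α : AddCircle (1 : ℝ))) ν ν := by
      intro n
      have := h.iterate n
      convert this using 1
      funext x
      induction n with
      | zero => simp
      | succ n ih =>
        rw [Function.iterate_succ_apply', ← ih (h.iterate n), rotMap, succ_nsmul]
        abel
    intro n
    rcases Int.eq_nat_or_neg n with ⟨k, rfl | rfl⟩
    · simpa using hn k
    · have h1 := hn k
      have := MeasurePreserving.symm
        (MeasurableEquiv.addRight (k • (α : AddCircle (1 : ℝ)))) h1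
      convert this using 1
      funext x
      simp [sub_eq_add_neg]
  have hinv : ∀ y : AddCircle (1 : ℝ), Measure.map (fun x => y + x) ν = ν := by
    intro y
    have hm : Measurable (fun x : AddCircle (1 : ℝ) => y + x) := measurable_const_add y
    haveI : IsProbabilityMeasure (Measure.map (fun x => y + x) ν) :=
      Measure.isProbabilityMeasure_map hm.aemeasurable
    apply ext_of_forall_integral_eq_of_IsFiniteMeasure
    intro f
    rw [integral_map hm.aemeasurable f.continuous.aestronglyMeasurable]
    have hc : Continuous fun y : AddCircle (1 : ℝ) => ∫ x, f (y + x) ∂ν := by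
      apply continuous_of_dominated (bound := fun _ => ‖f‖)
      · intro y
        exact (f.continuous.comp (continuous_const.add continuous_id)).aestronglyMeasurable
      · intro y
        exact Filter.Eventually.of_forall fun x => f.norm_coe_le_norm _
      · exact integrable_const _
      · exact Filter.Eventually.of_forall fun x =>
          f.continuous.comp (continuous_id.add continuous_const)
    have hd : DenseRange (fun n : ℤ => n • (α : AddCircle (1 : ℝ))) :=
      AddCircle.denseRange_zsmul_coe_iff.2 (by simpa using hα)
    have := hd.equalizer hc (continuous_const (y := ∫ x, f x ∂ν)) (by
      funext n
      simp only [Function.comp]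
      have hp := hz n
      have e := integral_map hp.measurable.aemeasurable
        (f.continuous.aestronglyMeasurable (μ := Measure.map _ ν))
      rw [hp.map_eq] at e
      rw [e]
      simp only [add_comm])
    exact congrFun this y
  haveI : ν.IsAddLeftInvariant := ⟨hinv⟩
  haveI : ν.IsAddHaarMeasure :=
    Measure.isAddHaarMeasure_of_isCompact_nonempty_interior ν univ isCompact_univ
      (by simp) (by simp) (by simp)
  exact Measure.isAddHaarMeasure_eq_of_isProbabilityMeasure ν volume

lemma rigid_of_crit (hα : Irrational α) (hcrit : ∀ N, Crit σ₀ σ₁ α β N)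
    (μ : Measure (AddCircle (1 : ℝ) × Fin 3)) [IsProbabilityMeasure μ]
    (hT : MeasurePreserving (VST α ![β] ![σ₀, σ₁]) μ μ) :
    Rigid (VST α ![β] ![σ₀, σ₁]) μ := by
  choose Q P hQ hP K hKm hKv hK using hcrit
  set T := VST α ![β] ![σ₀, σ₁] with hTdef
  have hν : μ.map Prod.fst = volume := by
    haveI : IsProbabilityMeasure (μ.map Prod.fst) :=
      Measure.isProbabilityMeasure_map measurable_fst.aemeasurable
    apply unique_rot hα
    have hrm : Measurable (rotMap α) := measurable_add_const _
    refine ⟨hrm, ?_⟩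
    rw [Measure.map_map hrm measurable_fst]
    have : rotMap α ∘ Prod.fst = Prod.fst ∘ T := rfl
    rw [this, ← Measure.map_map measurable_fst hT.measurable, hT.map_eq]
  have hKμ : ∀ n, μ (Prod.fst ⁻¹' K n) ≤ ENNReal.ofReal (1 / ((n : ℝ) + 1)) := by
    intro n
    rw [← Measure.map_apply measurable_fst (hKm n), hν]
    exact hKv n
  refine ⟨Q, tendsto_atTop_mono hQ tendsto_id, fun A hA => ?_⟩
  have himg : ∀ n, μ (((T^[Q n]) '' A) ∆ A) = μ (A ∆ ((T^[Q n]) ⁻¹' A)) := by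
    intro n
    have hmp := hT.iterate (Q n)
    have hinj : Function.Injective (T^[Q n]) := (VST_inj σ₀ σ₁ α β).iterate _
    have hme := hmp.measurable.measurableEmbedding hinj
    have hms : MeasurableSet (((T^[Q n]) '' A) ∆ A) := (hme.measurableSet_image.2 hA).symmDiff hA
    rw [← hmp.measure_preimage hms.nullMeasurableSet, preimage_symmDiff,
      preimage_image_eq _ hinj]
  simp only [himg]
  rw [ENNReal.tendsto_atTop_zero]
  intro ε hε
  letI : MetricSpace (Fin 3) := TopologicalSpace.metrizableSpaceMetric (Fin 3)
  have hε' : ε / 6 ≠ 0 := (ENNReal.div_pos hε.ne' (by simp)).ne'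
  obtain ⟨F, hFA, hFc, hF⟩ := hA.exists_isClosed_sdiff_lt (measure_ne_top μ A) hε'
  have hth := tendsto_measure_thickening_of_isClosed (μ := μ) (s := F)
    ⟨1, one_pos, measure_ne_top _ _⟩ hFc
  have hlt : μ F < μ F + ε / 6 := ENNReal.lt_add_right (measure_ne_top _ _) hε'
  obtain ⟨r, hr1, hr0⟩ := ((hth.eventually_lt_const hlt).and self_mem_nhdsWithin).exists
  replace hr0 : 0 < r := hr0
  set U := Metric.thickening r F with hU
  have hUm : MeasurableSet U := Metric.isOpen_thickening.measurableSet
  have hUF : μ (U \ F) ≤ ε / 6 := by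
    rw [measure_sdiff (Metric.self_subset_thickening hr0 F) hFc.measurableSet.nullMeasurableSet
      (measure_ne_top _ _)]
    exact tsub_le_iff_left.2 hr1.le
  have lim1 : Tendsto (fun n : ℕ => 1 / ((n : ℝ) + 1)) atTop (nhds 0) :=
    tendsto_one_div_add_atTop_nhds_zero_nat
  have lim2 : Tendsto (fun n : ℕ => ENNReal.ofReal (1 / ((n : ℝ) + 1))) atTop (nhds 0) := by
    have := ENNReal.tendsto_ofReal lim1
    rwa [ENNReal.ofReal_zero] at this
  obtain ⟨N, hN⟩ := eventually_atTop.1 ((lim1.eventually_lt_const hr0).and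
    (lim2.eventually_lt_const (pos_iff_ne_zero.2 hε')))
  refine ⟨N, fun n hn => ?_⟩
  obtain ⟨hn1, hn2⟩ := hN n hn
  have hmp := hT.iterate (Q n)
  have hsub : A \ (T^[Q n]) ⁻¹' A ⊆ (A \ F) ∪ (Prod.fst ⁻¹' K n ∪ (T^[Q n]) ⁻¹' (U \ F)) := by
    rintro ⟨a, s⟩ ⟨haA, haT⟩
    by_cases haF : (a, s) ∈ F
    · right
      by_cases haK : a ∈ K n
      · left; exact haK
      · right
        obtain ⟨x, rfl⟩ := QuotientAddGroup.mk_surjective a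
        have hone := hK n x haK
        have hit := VST_iter σ₀ σ₁ α β (Q n) x s
        rw [hone] at hit
        refine ⟨?_, fun hF' => haT (hFA hF')⟩
        rw [hU, Metric.mem_thickening_iff]
        refine ⟨_, haF, ?_⟩
        change dist ((VST α ![β] ![σ₀, σ₁])^[Q n] ((x : AddCircle (1 : ℝ)), s))
          ((x : AddCircle (1 : ℝ)), s) < r
        rw [hit, Prod.dist_eq]
        simp only [Equiv.Perm.coe_one, id_eq, dist_self]
        refine max_lt ?_ hr0
        refine lt_of_le_of_lt ?_ (lt_trans (hP n) hn1)
        rw [dist_eq_norm]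
        have e : ((x + Q n * α : ℝ) : AddCircle (1 : ℝ)) - (x : AddCircle (1 : ℝ)) =
            ((Q n * α - P n : ℝ) : AddCircle (1 : ℝ)) := by
          rw [← AddCircle.coe_sub, ← sub_eq_zero, ← AddCircle.coe_sub, AddCircle.coe_eq_zero_iff]
          exact ⟨P n, by simp⟩
        rw [e]
        exact QuotientAddGroup.norm_mk_le_norm
    · left; exact ⟨haA, haF⟩
  have hd1 : μ (A \ (T^[Q n]) ⁻¹' A) ≤ ε / 6 + (ε / 6 + ε / 6) := by
    refine (measure_mono hsub).trans ((measure_union_le _ _).trans ?_)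
    refine add_le_add hF.le ((measure_union_le _ _).trans ?_)
    refine add_le_add ((hKμ n).trans hn2.le) ?_
    rw [hmp.measure_preimage (hUm.diff hFc.measurableSet).nullMeasurableSet]
    exact hUF
  have hTA : MeasurableSet ((T^[Q n]) ⁻¹' A) := hmp.measurable hA
  have hd2 : μ ((T^[Q n]) ⁻¹' A \ A) = μ (A \ (T^[Q n]) ⁻¹' A) := by
    have e1 := measure_sdiff_add_inter (μ := μ) A hTA
    have e2 := measure_sdiff_add_inter (μ := μ) ((T^[Q n]) ⁻¹' A) hA
    rw [hmp.measure_preimage hA.nullMeasurableSet, ← e1, inter_comm] at e2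
    exact (ENNReal.add_left_inj (measure_ne_top _ _)).1 e2
  rw [Set.symmDiff_def]
  refine (measure_union_le _ _).trans ?_
  rw [hd2]
  refine (add_le_add hd1 hd1).trans (le_of_eq ?_)
  have : ε / 6 + (ε / 6 + ε / 6) + (ε / 6 + (ε / 6 + ε / 6)) = 6 * (ε / 6) := by ring
  rw [this, ENNReal.mul_div_cancel (by simp) (by simp)]

lemma crit_nhds (hα : Irrational α) {k : ℕ} (hgood : Good σ₀ σ₁ α k) (N : ℕ) :
    ∃ r > 0, ∀ β, |β - Int.fract (k * α)| < r → Crit σ₀ σ₁ α β N := by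
  have hk := hgood.1
  have hkpos : (0 : ℝ) < k := by exact_mod_cast hk
  set t : ℝ := 1 / ((N : ℝ) + 1) with ht
  have htpos : 0 < t := by positivity
  obtain ⟨Q, P, hQN, hQP, hQ⟩ := rigid_times σ₀ σ₁ α hα hgood
    (show 0 < t / (4 * k) by positivity) (N + 1)
  have hQpos : (0 : ℝ) < Q := by exact_mod_cast (by omega : 0 < Q)
  set b := Int.fract ((k : ℝ) * α) with hb
  set r : ℝ := t / (4 * Q) with hr
  refine ⟨r, by positivity, fun β hβ => ?_⟩
  let K1 : Set (AddCircle (1 : ℝ)) :=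
    ⋃ j ∈ Finset.Icc 1 k, Metric.closedBall ((j * α : ℝ) : AddCircle (1 : ℝ)) (t / (4 * k))
  let K2 : Set (AddCircle (1 : ℝ)) :=
    ⋃ i ∈ Finset.range Q, Metric.closedBall ((b - i * α : ℝ) : AddCircle (1 : ℝ)) r
  have hvol : ∀ (y : AddCircle (1 : ℝ)) (ρ : ℝ),
      volume (Metric.closedBall y ρ) ≤ ENNReal.ofReal (2 * ρ) := by
    intro y ρ
    rw [AddCircle.volume_closedBall]
    exact ENNReal.ofReal_le_ofReal (min_le_right _ _)
  have far : ∀ (x y ρ : ℝ), (x : AddCircle (1 : ℝ)) ∉ Metric.closedBall (y : AddCircle (1 : ℝ)) ρ →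
      ∀ m : ℤ, ρ < |x - (y + m)| := by
    intro x y ρ h m
    rw [Metric.mem_closedBall, not_le, dist_eq_norm] at h
    refine lt_of_lt_of_le h ?_
    have e : (x : AddCircle (1 : ℝ)) - (y : AddCircle (1 : ℝ)) =
        ((x - (y + m) : ℝ) : AddCircle (1 : ℝ)) := by
      rw [← AddCircle.coe_sub, ← sub_eq_zero, ← AddCircle.coe_sub, AddCircle.coe_eq_zero_iff]
      exact ⟨m, by simp⟩
    rw [e]
    exact QuotientAddGroup.norm_mk_le_norm
  refine ⟨Q, P, by omega, ?_, K1 ∪ K2, ?_, ?_, ?_⟩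
  · refine lt_of_lt_of_le hQP ?_
    apply div_le_self htpos.le
    have : (1 : ℝ) ≤ k := by exact_mod_cast hk
    linarith
  · refine MeasurableSet.union ?_ ?_
    · exact Finset.measurableSet_biUnion _ fun j _ => Metric.isClosed_closedBall.measurableSet
    · exact Finset.measurableSet_biUnion _ fun j _ => Metric.isClosed_closedBall.measurableSet
  · have v1 : volume K1 ≤ ENNReal.ofReal (t / 2) := by
      refine (measure_biUnion_finset_le _ _).trans
        ((Finset.sum_le_sum fun j _ => hvol _ _).trans (le_of_eq ?_))
      rw [Finset.sum_const, Nat.card_Icc, Nat.add_sub_cancel, nsmul_eq_mul,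
        ← ENNReal.ofReal_natCast, ← ENNReal.ofReal_mul hkpos.le]
      congr 1; field_simp; norm_num
    have v2 : volume K2 ≤ ENNReal.ofReal (t / 2) := by
      refine (measure_biUnion_finset_le _ _).trans
        ((Finset.sum_le_sum fun j _ => hvol _ _).trans (le_of_eq ?_))
      rw [Finset.sum_const, Finset.card_range, nsmul_eq_mul,
        ← ENNReal.ofReal_natCast, ← ENNReal.ofReal_mul hQpos.le]
      congr 1; rw [hr]; field_simp; norm_num
    refine (measure_union_le _ _).trans ((add_le_add v1 v2).trans (le_of_eq ?_))
    rw [← ENNReal.ofReal_add (by positivity) (by positivity)]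
    congr 1; ring
  · intro x hx
    rw [Set.mem_union, not_or] at hx
    obtain ⟨hx1, hx2⟩ := hx
    have : SS σ₀ σ₁ α β Q x = SS σ₀ σ₁ α b Q x := by
      apply SS_congr
      intro i hi
      have hnot : (x : AddCircle (1 : ℝ)) ∉
          Metric.closedBall ((b - i * α : ℝ) : AddCircle (1 : ℝ)) r := by
        intro h
        exact hx2 (Set.mem_biUnion (Finset.mem_coe.2 (Finset.mem_range.2 hi)) h)
      have hf := far _ _ _ hnot ⌊x + i * α⌋
      rw [show x - (b - i * α + ⌊x + i * α⌋) = Int.fract (x + i * α) - b by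
        rw [Int.fract]; ring, lt_abs] at hf
      rw [abs_lt] at hβ
      apply sg_eq_of_not_between
      · rintro ⟨ha, hb⟩
        rcases hf with h | h <;> linarith
      · rintro ⟨ha, hb⟩
        rcases hf with h | h <;> linarith
    rw [this]
    apply hQ
    intro j hj hjk m
    apply far
    intro h
    exact hx1 (Set.mem_biUnion (Finset.mem_coe.2 (Finset.mem_Icc.2 ⟨hj, hjk⟩)) h)

lemma exists_beta (hα : Irrational α) (h0 : 0 < α) (h1 : α < 1)
    (hex : ∃ k, Good σ₀ σ₁ α k) :
    ∃ β : ℝ, Irrational β ∧ 0 < β ∧ β < 1 ∧ β ∉ ZPlusAlphaZ α ∧ ∀ N, Crit σ₀ σ₁ α β N := by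
  let D : Set ℝ := {b | ∃ k, Good σ₀ σ₁ α k ∧ b = Int.fract (k * α)}
  let E : Set ℝ := ZPlusAlphaZ α ∪ Set.range ((↑) : ℚ → ℝ)
  have hE : E.Countable := by
    refine Set.Countable.union ?_ (Set.countable_range _)
    have : ZPlusAlphaZ α = Set.range (fun p : ℤ × ℤ => (p.1 : ℝ) + (p.2 : ℝ) * α) := by
      ext x
      constructor
      · rintro ⟨m, k, rfl⟩; exact ⟨(m, k), rfl⟩
      · rintro ⟨⟨m, k⟩, rfl⟩; exact ⟨m, k, rfl⟩
    rw [this]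
    exact Set.countable_range _
  haveI : Countable E := hE.to_subtype
  choose! r hr0 hr using fun (k : ℕ) (hk : Good σ₀ σ₁ α k) => fun N : ℕ =>
    crit_nhds σ₀ σ₁ α hα hk N
  let O : ℕ → Set ℝ := fun N =>
    ⋃ (k : ℕ) (_ : Good σ₀ σ₁ α k), Metric.ball (Int.fract (k * α)) (r k N)
  have hDO : ∀ N, D ⊆ O N := by
    rintro N b ⟨k, hk, rfl⟩
    exact Set.mem_iUnion₂.2 ⟨k, hk, Metric.mem_ball_self (hr0 k hk N)⟩
  have hOo : ∀ N, IsOpen (O N) := fun N =>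
    isOpen_iUnion fun k => isOpen_iUnion fun _ => Metric.isOpen_ball
  let X := closure D
  haveI : CompleteSpace X := isClosed_closure.completeSpace_coe
  let f : ℕ ⊕ E → Set X := fun i => match i with
    | Sum.inl N => {b | (b : ℝ) ∈ O N}
    | Sum.inr e => {b | (b : ℝ) ≠ e}
  have hfo : ∀ i, IsOpen (f i) := by
    rintro (N | e)
    · exact (hOo N).preimage continuous_subtype_val
    · exact isOpen_ne.preimage continuous_subtype_val
  have hfd : ∀ i, Dense (f i) := by
    intro i
    rw [Metric.dense_iff]
    rintro ⟨b, hb⟩ ρ hρ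
    obtain ⟨d, hdD, hd⟩ := Metric.mem_closure_iff.1 hb ρ hρ
    rcases i with N | e
    · refine ⟨⟨d, subset_closure hdD⟩, ?_, hDO N hdD⟩
      rw [Metric.mem_ball, dist_comm]; exact hd
    · by_cases hde : d = e
      · obtain ⟨k, hk, rfl⟩ := hdD
        obtain ⟨k', hk', hne, hlt⟩ := good_next σ₀ σ₁ α hα h0 h1 hk
          (show 0 < ρ - dist b (Int.fract (k * α)) by linarith)
        refine ⟨⟨Int.fract (k' * α), subset_closure ⟨k', hk', rfl⟩⟩, ?_, ?_⟩
        · rw [Metric.mem_ball, Subtype.dist_eq]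
          have := dist_triangle (Int.fract ((k' : ℝ) * α)) (Int.fract (k * α)) b
          rw [dist_comm _ b, Real.dist_eq (Int.fract ((k' : ℝ) * α))] at this
          change dist (Int.fract ((k' : ℝ) * α)) b < ρ
          rw [dist_comm _ b]
          have e := dist_comm b (Int.fract ((k' : ℝ) * α))
          have e' := dist_comm b (Int.fract ((k : ℝ) * α))
          linarith
        · change Int.fract ((k' : ℝ) * α) ≠ e
          rw [← hde]; exact hne
      · refine ⟨⟨d, subset_closure hdD⟩, ?_, hde⟩
        rw [Metric.mem_ball, dist_comm]; exact hd
  have hdense := dense_iInter_of_isOpen hfo hfd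
  obtain ⟨k, hk⟩ := hex
  haveI : Nonempty X := ⟨⟨Int.fract (k * α), subset_closure ⟨k, hk, rfl⟩⟩⟩
  obtain ⟨⟨β, hβX⟩, hβ⟩ := hdense.nonempty
  rw [Set.mem_iInter] at hβ
  have hβE : β ∉ E := fun h => hβ (Sum.inr ⟨β, h⟩) rfl
  have hβO : ∀ N, β ∈ O N := fun N => hβ (Sum.inl N)
  have hβirr : Irrational β := fun h => hβE (Or.inr h)
  have hβI : β ∈ Set.Icc (0 : ℝ) 1 := by
    have : closure D ⊆ Set.Icc (0 : ℝ) 1 := by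
      apply closure_minimal _ isClosed_Icc
      rintro b ⟨k, hk, rfl⟩
      exact ⟨Int.fract_nonneg _, (Int.fract_lt_one _).le⟩
    exact this hβX
  refine ⟨β, hβirr, lt_of_le_of_ne hβI.1 (Ne.symm hβirr.ne_zero), lt_of_le_of_ne hβI.2 hβirr.ne_one,
    fun h => hβE (Or.inl h), fun N => ?_⟩
  obtain ⟨k, hk, hball⟩ := Set.mem_iUnion₂.1 (hβO N)
  rw [Metric.mem_ball, Real.dist_eq] at hball
  exact hr k hk N β hball

lemma swap_sq : ∀ s : Equiv.Perm (Fin 3), s.IsSwap → s * s = 1 := by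
  rintro s ⟨x, y, _, rfl⟩
  exact Equiv.swap_mul_self x y

lemma rel_aux : ∀ x y : Fin 3, ∀ c : Equiv.Perm (Fin 3), x ≠ y → c * (c * c) = 1 → c ≠ 1 →
    Equiv.swap x y * c * Equiv.swap x y = c * c := by decide

lemma perm_rel {s c : Equiv.Perm (Fin 3)} (hs : s.IsSwap) (hc : c.IsThreeCycle) :
    s * s = 1 ∧ c * (c * c) = 1 ∧ s * c * s = c * c := by
  have h3 : c * (c * c) = 1 := by
    have := pow_orderOf_eq_one c
    rw [hc.orderOf, pow_succ, pow_two] at this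
    rwa [← mul_assoc]
  have h1 : c ≠ 1 := by
    rintro rfl
    have := hc.orderOf
    simp at this
  refine ⟨swap_sq s hs, h3, ?_⟩
  obtain ⟨x, y, hxy, rfl⟩ := hs
  exact rel_aux x y c hxy h3 h1

end
end VSProof

theorem stmt_15 (σ₀ σ₁ : Equiv.Perm (Fin 3))
    (hperm : (σ₀.IsSwap ∧ σ₁.IsThreeCycle) ∨ (σ₁.IsSwap ∧ σ₀.IsThreeCycle))
    (α : ℝ) (hα : Irrational α) (hα0 : 0 < α) (hα1 : α < 1)
    (hbpq : BoundedPartialQuotients α) :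
    ∃ β : ℝ, Irrational β ∧ 0 < β ∧ β < 1 ∧ β ∉ ZPlusAlphaZ α ∧
      ∀ μ : Measure (AddCircle (1 : ℝ) × Fin 3), IsProbabilityMeasure μ →
        MeasurePreserving (VST α ![β] ![σ₀, σ₁]) μ μ → Rigid (VST α ![β] ![σ₀, σ₁]) μ := by
  obtain ⟨β, h1, h2, h3, h4, h5⟩ := VSProof.exists_beta σ₀ σ₁ α hα hα0 hα1
    (VSProof.exists_good σ₀ σ₁ α hα0 hα1 hα (by
      rcases hperm with ⟨h, h'⟩ | ⟨h, h'⟩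
      · exact Or.inl (VSProof.perm_rel h h')
      · exact Or.inr (VSProof.perm_rel h h')))
  refine ⟨β, h1, h2, h3, h4, fun μ hμ hT => ?_⟩
  exact VSProof.rigid_of_crit σ₀ σ₁ α β hα h5 μ hT
end

section
/- Let d = 2 and r = 1, let β ∈ (0,1) be irrational with β ∉ ℤ + αℤ (in particular β ≠ 1 − α), let σ₀ be the exchange of {1, 2} and σ₁ the identity (the Veech 1969 system), and assume α has bounded partial quotients. If the language L' of the rotation with marked point β is linearly recurrent, then for every ergodic T-invariant Borel probability measure μ the system (T, μ) is not rigid; if L' is not linearly recurrent, then for every T-invariant Borel probability measure μ the system (T, μ) is rigid. -/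
open MeasureTheory Filter Set
open scoped ENNReal symmDiff Classical

open MeasureTheory Filter Set
open scoped ENNReal symmDiff Classical

/-- abstract Diophantine bound for a Gauss orbit -/
theorem gauss_bound (C : ℝ) (hC : 1 ≤ C) (ρ : ℕ → ℝ) (a : ℕ → ℤ) (h0 : ∀ n, 1 / C ≤ ρ n)
    (h1 : ∀ n, ρ n < 1) (ha : ∀ n, 1 ≤ a n) (hr : ∀ n, ρ n * (a n + ρ (n + 1)) = 1) :
    ∀ v : ℕ, 1 ≤ v → ∀ n : ℕ, ∀ u : ℤ, 1 / (C + 1) ^ 2 ≤ v * |v * ρ n - u| := by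
  have hCpos : 0 < C := by linarith
  have hiC : 0 < 1 / C := by positivity
  have hpos : ∀ n, 0 < ρ n := fun n => lt_of_lt_of_le hiC (h0 n)
  have hone : ∀ n, 1 ≤ C * ρ n := fun n => by
    have := mul_le_mul_of_nonneg_left (h0 n) hCpos.le
    rwa [mul_one_div_cancel hCpos.ne'] at this
  set c := 1 / (C + 1) ^ 2 with hc
  have hcpos : 0 < c := by positivity
  have hcc : c * (C + 1) ^ 2 = 1 := by rw [hc]; field_simp
  have hgap : ∀ n, 1 ≤ (C + 1) * (1 - ρ n) := fun n => by
    have e := hr n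
    have h2 : (1 : ℝ) ≤ a n := by exact_mod_cast ha n
    have h3 := hone (n + 1)
    have h4 : 1 - ρ n ≥ ρ n * ρ (n + 1) := by nlinarith [hpos n]
    have h5 : ρ n ≤ C * (ρ n * ρ (n + 1)) := by nlinarith [hpos n]
    nlinarith
  intro v
  induction v using Nat.strong_induction_on with
  | _ v ih =>
    intro hv n u
    have hv1 : (1 : ℝ) ≤ v := by exact_mod_cast hv
    have step : ∀ (n : ℕ) (x y : ℝ), x * ρ n - y = -(ρ n * (y * ρ (n + 1) - (x - y * a n))) := by
      intro n x y
      have := hr n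
      linear_combination y * this
    have hcle : c ≤ 1 / (C+1) := by
      rw [hc]
      apply one_div_le_one_div_of_le (by positivity)
      nlinarith
    have hcle2 : c * C ≤ 1 := by nlinarith
    have hcle3 : c * (C + 1) ≤ 1 := by nlinarith
    have hcle4 : c * C ^ 2 ≤ 1 := by nlinarith
    by_cases hu0 : u ≤ 0
    · have hu0' : (u : ℝ) ≤ 0 := by exact_mod_cast hu0
      have h6 : ρ n ≤ |v * ρ n - u| := by
        refine le_trans ?_ (le_abs_self _)
        nlinarith [hpos n]
      have h7 : c ≤ ρ n := by
        have := hone n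
        have := hpos n
        nlinarith
      nlinarith [abs_nonneg (v * ρ n - u)]
    push Not at hu0
    by_cases huv : (v : ℤ) ≤ u
    · have huv' : (v : ℝ) ≤ u := by exact_mod_cast huv
      have h6 : 1 - ρ n ≤ |v * ρ n - u| := by
        refine le_trans ?_ (neg_le_abs _)
        nlinarith [h1 n]
      have h7 : c ≤ 1 - ρ n := by
        have := hgap n
        have := h1 n
        nlinarith
      nlinarith [abs_nonneg (v * ρ n - u)]
    push Not at huv
    obtain ⟨w, rfl⟩ : ∃ w : ℕ, u = w := ⟨u.toNat, by omega⟩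
    have hw : 1 ≤ w := by omega
    have hwv : w < v := by omega
    have hwR : (1 : ℝ) ≤ w := by exact_mod_cast hw
    have e1 : |(v : ℝ) * ρ n - (w : ℤ)| = ρ n * |w * ρ (n + 1) - ((v - w * a n : ℤ) : ℝ)| := by
      rw [step n v, abs_neg, abs_mul, abs_of_pos (hpos n)]
      push_cast; ring_nf
    by_cases hle : (w : ℝ) ≤ v * ρ n
    · have h6 := ih w hwv hw (n + 1) (v - w * a n)
      rw [e1]
      set X := |(w : ℝ) * ρ (n + 1) - ((v - w * a n : ℤ) : ℝ)| with hX
      have : 0 ≤ X := abs_nonneg _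
      nlinarith
    · push Not at hle
      set u' : ℤ := v - w * a n with hu'
      by_cases hu'0 : u' ≤ 0
      · have hu0' : (u' : ℝ) ≤ 0 := by exact_mod_cast hu'0
        have h6 : ρ (n + 1) ≤ |w * ρ (n + 1) - u'| := by
          refine le_trans ?_ (le_abs_self _)
          nlinarith [hpos (n + 1)]
        rw [e1]
        have h8 : ρ n * ρ (n + 1) ≤ ρ n * |w * ρ (n + 1) - u'| :=
          mul_le_mul_of_nonneg_left h6 (hpos n).le
        have h9 : 1 ≤ C ^ 2 * (ρ n * ρ (n + 1)) := by
          have := mul_le_mul (hone n) (hone (n + 1)) (by norm_num) (by nlinarith [hpos n])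
          nlinarith
        have h10 : c ≤ ρ n * ρ (n + 1) := by
          have : 0 < ρ n * ρ (n + 1) := mul_pos (hpos n) (hpos (n + 1))
          nlinarith
        nlinarith
      · push Not at hu'0
        obtain ⟨w', hw'⟩ : ∃ w' : ℕ, u' = w' := ⟨u'.toNat, by omega⟩
        have hw'1 : 1 ≤ w' := by omega
        have hw'R : (w' : ℝ) = v - w * a n := by
          have : (w' : ℤ) = v - w * a n := by rw [← hw']
          exact_mod_cast this
        have hw'v : w' < v := by
          have : (w' : ℤ) = v - w * a n := by rw [← hw']
          have h2 := ha n
          nlinarith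
        have h6 := ih w' hw'v hw'1 (n + 2) (w - w' * a (n + 1))
        have e2 : |(w : ℝ) * ρ (n + 1) - w'| =
            ρ (n + 1) * |w' * ρ (n + 2) - ((w - w' * a (n + 1) : ℤ) : ℝ)| := by
          rw [step (n + 1) w, abs_neg, abs_mul, abs_of_pos (hpos (n + 1))]
          push_cast; ring_nf
        rw [e1, hw']
        rw [show (((w' : ℤ)) : ℝ) = (w' : ℝ) by push_cast; rfl, e2]
        set X := |(w' : ℝ) * ρ (n + 2) - ((w - w' * a (n + 1) : ℤ) : ℝ)| with hX
        have hX0 : 0 ≤ X := abs_nonneg _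
        have h7 : (w' : ℝ) ≤ v * (ρ n * ρ (n + 1)) := by
          have e3 : ρ n * ρ (n + 1) = 1 - a n * ρ n := by linear_combination hr n
          have h2 : (1 : ℝ) ≤ a n := by exact_mod_cast ha n
          rw [e3, hw'R]
          nlinarith
        nlinarith

theorem cf_props (α : ℝ) (hα : Irrational α) (hα0 : 0 < α) (hα1 : α < 1) (n : ℕ) :
    0 < (cfPair α n).2 ∧ (cfPair α n).2 < (cfPair α n).1 ∧
      Irrational ((cfPair α n).1 / (cfPair α n).2) := by
  induction n with
  | zero => exact ⟨hα0, hα1, by simpa [cfPair] using hα⟩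
  | succ n ih =>
    obtain ⟨h1, h2, h3⟩ := ih
    set A := (cfPair α n).1
    set B := (cfPair α n).2
    have e1 : (cfPair α (n + 1)).1 = B := rfl
    have e2 : (cfPair α (n + 1)).2 = A - (⌊A / B⌋ : ℝ) * B := rfl
    have e3 : A - (⌊A / B⌋ : ℝ) * B = B * Int.fract (A / B) := by
      rw [Int.fract]; field_simp
    have hf0 : 0 < Int.fract (A / B) := by
      refine lt_of_le_of_ne (Int.fract_nonneg _) fun h => ?_
      exact h3 ⟨⌊A / B⌋, by
        have := Int.floor_add_fract (A / B); rw [← h] at this; push_cast; linarith⟩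
    have hf1 := Int.fract_lt_one (A / B)
    rw [e1, e2, e3]
    refine ⟨by positivity, by nlinarith, ?_⟩
    have : B / (B * Int.fract (A / B)) = (A / B - (⌊A / B⌋ : ℝ))⁻¹ := by
      rw [Int.fract]
      rw [div_mul_eq_div_div, div_self h1.ne', one_div]
    rw [this]
    exact (h3.sub_intCast _).inv

/-- badly approximable -/
def BA (α c : ℝ) : Prop :=
  0 < c ∧ ∀ k : ℤ, k ≠ 0 → c ≤ |(k : ℝ)| * ‖((k * α : ℝ) : AddCircle (1 : ℝ))‖

theorem circ_norm (x : ℝ) : ‖(x : AddCircle (1 : ℝ))‖ = |x - round x| := by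
  exact UnitAddCircle.norm_eq (x := x)

theorem circ_norm_int (x : ℝ) (m : ℤ) :
    ((x + m : ℝ) : AddCircle (1 : ℝ)) = (x : AddCircle (1 : ℝ)) := by
  have h : ((m : ℝ) : AddCircle (1 : ℝ)) = 0 := by
    have := AddCircle.coe_zsmul (p := (1 : ℝ)) (n := m) (x := 1)
    simpa using this
  rw [AddCircle.coe_add, h, add_zero]

theorem circ_norm_le (x : ℝ) (m : ℤ) : ‖(x : AddCircle (1 : ℝ))‖ ≤ |x - m| := by
  rw [circ_norm]; exact round_le x m

theorem ba_of_bpq (α : ℝ) (hα : Irrational α) (hα0 : 0 < α) (hα1 : α < 1)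
    (hb : BoundedPartialQuotients α) : ∃ c, BA α c := by
  obtain ⟨C, hC⟩ := hb
  set ρ : ℕ → ℝ := fun n => (cfPair α n).2 / (cfPair α n).1 with hρ
  set a : ℕ → ℤ := fun n => ⌊(cfPair α n).1 / (cfPair α n).2⌋ with ha
  have key := gauss_bound (C + 1) (by linarith [(Nat.cast_nonneg C : (0 : ℝ) ≤ C)]) ρ a ?_ ?_ ?_ ?_
  · refine ⟨1 / ((C : ℝ) + 1 + 1) ^ 2, by positivity, fun k hk => ?_⟩
    have h := key k.natAbs (by omega) 0
    have e0 : ρ 0 = α := by simp [hρ, cfPair]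
    rw [e0] at h
    have e1 : ((k.natAbs : ℕ) : ℝ) = |(k : ℝ)| := by
      rw [Nat.cast_natAbs]; push_cast; rfl
    rw [e1] at h
    rw [circ_norm]
    rcases le_or_gt 0 (k : ℝ) with h0 | h0
    · have := h (round (k * α))
      rwa [abs_of_nonneg h0] at this ⊢
    · have := h (- round (k * α))
      rw [abs_of_neg h0] at this ⊢
      rw [← abs_neg ((k : ℝ) * α - _)]
      convert this using 3
      push_cast; ring
  · intro n
    obtain ⟨h1, h2, h3⟩ := cf_props α hα hα0 hα1 n
    have h4 := hC (n + 1) (by omega)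
    have h5 : a n ≤ C := by
      have : (a n).toNat ≤ C := h4
      omega
    have h6 : (cfPair α n).1 / (cfPair α n).2 < C + 1 := by
      have := Int.lt_floor_add_one ((cfPair α n).1 / (cfPair α n).2)
      have h5' : ((a n : ℤ) : ℝ) ≤ C := by exact_mod_cast h5
      simp only [ha] at h5'
      linarith
    simp only [hρ]
    rw [div_lt_iff₀ h1] at h6
    rw [div_le_div_iff₀ (by positivity) (by linarith)]
    nlinarith
  · intro n
    obtain ⟨h1, h2, h3⟩ := cf_props α hα hα0 hα1 n
    simp only [hρ]
    rw [div_lt_one (by linarith)]; exact h2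
  · intro n
    obtain ⟨h1, h2, h3⟩ := cf_props α hα hα0 hα1 n
    simp only [ha]
    rw [Int.le_floor, le_div_iff₀ h1]; push_cast; linarith
  · intro n
    obtain ⟨h1, h2, h3⟩ := cf_props α hα hα0 hα1 n
    have e1 : ρ (n + 1) = ((cfPair α n).1 - (a n : ℝ) * (cfPair α n).2) / (cfPair α n).2 := rfl
    rw [e1]
    simp only [hρ]
    have : (cfPair α n).1 ≠ 0 := by linarith
    field_simp
    ring

open MeasureTheory Filter Set
open scoped ENNReal symmDiff Classical

/-- The indicator of `[0,β)` mod 1 as an integer-valued function on `ℝ`. -/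
noncomputable def FF (β x : ℝ) : ℤ := if Int.fract x < β then 1 else 0

theorem circleRepr_coe (x : ℝ) : circleRepr (x : AddCircle (1 : ℝ)) = Int.fract x := by
  unfold circleRepr
  simp

theorem rot_iter (α : ℝ) (i : ℕ) (x : AddCircle (1 : ℝ)) :
    (rotMap α)^[i] x = x + ((i * α : ℝ) : AddCircle (1 : ℝ)) := by
  induction i with
  | zero => simp
  | succ i ih =>
    rw [Function.iterate_succ_apply', ih, rotMap, add_assoc, ← AddCircle.coe_add]
    congr 2; push_cast; ring

theorem atomIdx_one (β x : ℝ) : atomIdx ![β] x = if x < β then 0 else 1 := by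
  unfold atomIdx
  apply Fin.ext
  by_cases h : x < β
  · simp [h]
  · simp [h, not_lt.mp h]

theorem rotCode_eq (α β x : ℝ) (i : ℕ) :
    rotCode α ![β] (x : AddCircle (1 : ℝ)) i = if FF β (x + i * α) = 1 then 0 else 1 := by
  unfold rotCode FF
  rw [rot_iter, ← AddCircle.coe_add, circleRepr_coe, atomIdx_one]
  by_cases h : Int.fract (x + i * α) < β <;> simp [h]

theorem FF_cases (β x : ℝ) : FF β x = 0 ∨ FF β x = 1 := by
  unfold FF; split_ifs <;> simp

theorem rotCode_eq_iff (α β x y : ℝ) (i j : ℕ) :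
    rotCode α ![β] (x : AddCircle (1 : ℝ)) i = rotCode α ![β] (y : AddCircle (1 : ℝ)) j ↔
      FF β (x + i * α) = FF β (y + j * α) := by
  rw [rotCode_eq, rotCode_eq]
  rcases FF_cases β (x + i * α) with h | h <;> rcases FF_cases β (y + j * α) with h' | h' <;>
    simp [h, h']

def LR' (α β : ℝ) : Prop := ∃ K : ℕ, 1 ≤ K ∧ ∀ (x z : ℝ) (m n : ℕ), K * m ≤ n →
  ∃ j, j + m ≤ n ∧ ∀ i < m, FF β (x + i * α) = FF β (z + (j + i : ℕ) * α)

theorem lr_iff (α β : ℝ) : LinearlyRecurrent (LRot α ![β]) ↔ LR' α β := by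
  constructor
  · rintro ⟨K, hK, h⟩
    refine ⟨K, hK, fun x z m n hmn => ?_⟩
    obtain ⟨u, u', e⟩ := h (List.ofFn fun i : Fin m => rotCode α ![β] (x : AddCircle (1 : ℝ)) i)
      ⟨x, by intro i; simp⟩ (List.ofFn fun i : Fin n => rotCode α ![β] (z : AddCircle (1 : ℝ)) i)
      ⟨z, by intro i; simp⟩ (by simpa using hmn)
    have hl := congrArg List.length e
    simp at hl
    refine ⟨u.length, by omega, fun i hi => ?_⟩
    rw [← rotCode_eq_iff]
    have h1 : (List.ofFn fun i : Fin n => rotCode α ![β] (z : AddCircle (1 : ℝ)) i)[u.length + i]?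
      = some (rotCode α ![β] (z : AddCircle (1 : ℝ)) (u.length + i)) := by
      have : u.length + i < n := by omega
      simp [this]
    rw [e, List.append_assoc, List.getElem?_append_right (by omega),
      List.getElem?_append_left (by simp; omega)] at h1
    have h2 : u.length + i - u.length = i := by omega
    rw [h2] at h1
    simp [hi] at h1
    exact h1
  · rintro ⟨K, hK, h⟩
    refine ⟨K, hK, ?_⟩
    rintro w ⟨x, hx⟩ v ⟨z, hz⟩ hl
    obtain ⟨x, rfl⟩ := QuotientAddGroup.mk_surjective x
    obtain ⟨z, rfl⟩ := QuotientAddGroup.mk_surjective z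
    obtain ⟨j, hj, hf⟩ := h x z w.length v.length hl
    refine ⟨v.take j, v.drop (j + w.length), ?_⟩
    have hw : w = (v.drop j).take w.length := by
      apply List.ext_getElem
      · simp; omega
      · intro i h1 h2
        have e1 := hx ⟨i, h1⟩
        have e2 := hz ⟨j + i, by omega⟩
        simp only [List.get_eq_getElem] at e1 e2
        rw [List.getElem_take, List.getElem_drop, e1, e2]
        exact (rotCode_eq_iff α β x z i (j + i)).2 (hf i h1)
    rw [hw]
    simp only [List.length_take, List.length_drop]
    rw [Nat.min_eq_left (by omega), List.append_assoc, ← List.drop_drop, List.take_append_drop,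
      List.take_append_drop]

/-- FF changes only when crossing `0` or `β`. -/
theorem FF_cross (β x y : ℝ) (hxy : x ≤ y) (h : FF β x ≠ FF β y) :
    ∃ m : ℤ, ∃ c : ℝ, (c = 0 ∨ c = β) ∧ x < c + m ∧ c + m ≤ y := by
  have hx := Int.floor_add_fract x
  have hy := Int.floor_add_fract y
  have hx1 := Int.fract_lt_one x
  have hy0 := Int.fract_nonneg y
  rcases (Int.floor_le_floor hxy).lt_or_eq with hl | he
  · refine ⟨⌊y⌋, 0, Or.inl rfl, ?_, ?_⟩
    · have : (⌊x⌋ : ℝ) + 1 ≤ ⌊y⌋ := by exact_mod_cast hl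
      linarith
    · linarith
  · refine ⟨⌊y⌋, β, Or.inr rfl, ?_⟩
    rw [he] at hx
    unfold FF at h
    have : Int.fract x ≤ Int.fract y := by linarith
    by_cases h1 : Int.fract x < β <;> by_cases h2 : Int.fract y < β
    · simp [h1, h2] at h
    · constructor <;> linarith
    · linarith
    · simp [h1, h2] at h

theorem FF_add_int (β x : ℝ) (m : ℤ) : FF β (x + m) = FF β x := by
  unfold FF; rw [Int.fract_add_intCast]

theorem FF_eq_one (β x : ℝ) (m : ℤ) (h1 : m ≤ x) (h2 : x < m + β) (hβ : β < 1) : FF β x = 1 := by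
  have : Int.fract x = x - m := by
    rw [Int.fract_eq_iff]; exact ⟨by linarith, by linarith, m, by ring⟩
  unfold FF; rw [this, if_pos (by linarith)]

theorem FF_eq_zero (β x : ℝ) (m : ℤ) (h1 : m + β ≤ x) (h2 : x < m + 1) (hβ : 0 < β) :
    FF β x = 0 := by
  have : Int.fract x = x - m := by
    rw [Int.fract_eq_iff]; exact ⟨by linarith, by linarith, m, by ring⟩
  unfold FF; rw [this, if_neg (by linarith)]

/-- The set where `FF` and its translate differ contains an arc. -/
theorem FF_arc (β t : ℝ) (h0 : 0 < β) (h1 : β < 1) (ht : |t| ≤ 1 / 2) :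
    ∃ a : ℝ, ∀ x, a ≤ x → x < a + min |t| (min β (1 - β)) → FF β x ≠ FF β (x + t) := by
  have main : ∀ t : ℝ, 0 ≤ t → t ≤ 1 / 2 →
      ∃ a : ℝ, ∀ x, a ≤ x → x < a + min t (min β (1 - β)) → FF β x ≠ FF β (x + t) := by
    intro t ht0 ht
    set l := min t (min β (1 - β)) with hl
    have l1 : l ≤ t := min_le_left _ _
    have l2 : l ≤ β := (min_le_right _ _).trans (min_le_left _ _)
    have l3 : l ≤ 1 - β := (min_le_right _ _).trans (min_le_right _ _)
    by_cases hc : β + t ≤ 1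
    · refine ⟨β - l, fun x hx1 hx2 => ?_⟩
      rw [FF_eq_one β x 0 (by push_cast; linarith) (by push_cast; linarith) h1,
        FF_eq_zero β (x + t) 0 (by push_cast; linarith) (by push_cast; linarith) h0]
      simp
    · refine ⟨- l, fun x hx1 hx2 => ?_⟩
      rw [FF_eq_zero β x (-1) (by push_cast; linarith) (by push_cast; linarith) h0,
        FF_eq_one β (x + t) 0 (by push_cast; linarith) (by push_cast; linarith) h1]
      simp
  rcases le_total 0 t with h | h
  · rw [abs_of_nonneg h] at ht ⊢
    exact main t h ht
  · rw [abs_of_nonpos h] at ht ⊢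
    obtain ⟨a, ha⟩ := main (-t) (by linarith) ht
    refine ⟨a - t, fun x hx1 hx2 => ?_⟩
    have := ha (x + t) (by linarith) (by linarith)
    rw [show x + t + -t = x by ring] at this
    exact this.symm

/-- Sign of the position relative to a marked point is visible in the letter. -/
theorem FF_switch (β c y y' : ℝ) (h0 : 0 < β) (h1 : β < 1) (hc : c = 0 ∨ c = β)
    (hy : |y| < min β (1 - β)) (hy' : |y'| < min β (1 - β)) (h : FF β (c + y) = FF β (c + y')) :
    0 ≤ y ↔ 0 ≤ y' := by
  have key : ∀ y, |y| < min β (1 - β) → ((0 ≤ y) ↔ (FF β (c + y) = if c = 0 then 1 else 0)) := by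
    intro y hy
    rw [lt_min_iff, abs_lt, abs_lt] at hy
    obtain ⟨⟨a1, a2⟩, a3, a4⟩ := hy
    rcases hc with rfl | rfl
    · simp only [zero_add, if_true]
      constructor
      · intro hh
        exact FF_eq_one β y 0 (by push_cast; linarith) (by push_cast; linarith) h1
      · intro hh
        by_contra hn
        rw [FF_eq_zero β y (-1) (by push_cast; linarith) (by push_cast; linarith) h0] at hh
        simp at hh
    · rw [if_neg h0.ne']
      constructor
      · intro hh
        exact FF_eq_zero c (c + y) 0 (by push_cast; linarith) (by push_cast; linarith) h0
      · intro hh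
        by_contra hn
        rw [FF_eq_one c (c + y) 0 (by push_cast; linarith) (by push_cast; linarith) h1] at hh
        simp at hh
  rw [key y hy, key y' hy', h]

theorem circ_lift (x : ℝ) : ∃ t : ℝ, ∃ m : ℤ, x = t + m ∧ |t| = ‖(x : AddCircle (1 : ℝ))‖ ∧
    |t| ≤ 1 / 2 :=
  ⟨x - round x, round x, by ring, (circ_norm x).symm, abs_sub_round x⟩

/-- Dirichlet times. -/
theorem dirichlet_time (α c : ℝ) (hB : BA α c) (n : ℕ) (hn : 0 < n) :
    ∃ q : ℕ, ∃ p : ℤ, 0 < q ∧ q ≤ n ∧ c * (n + 1) ≤ q ∧ |q * α - p| ≤ 1 / (n + 1) ∧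
      IsCoprime (q : ℤ) p := by
  obtain ⟨r, hr, hrn⟩ := Real.exists_rat_abs_sub_le_and_den_le α hn
  have hq : (0 : ℝ) < r.den := by exact_mod_cast r.pos
  have hn1 : (0 : ℝ) < n + 1 := by positivity
  have hr' : |r.den * α - r.num| ≤ 1 / (n + 1) := by
    have e : r.den * α - r.num = r.den * (α - r) := by
      have : (r : ℝ) = r.num / r.den := by exact_mod_cast (Rat.num_div_den r).symm
      rw [this]; field_simp
    rw [e, abs_mul, abs_of_pos hq]
    calc (r.den : ℝ) * |α - r| ≤ r.den * (1 / ((n + 1) * r.den)) := by gcongr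
      _ = 1 / (n + 1) := by field_simp
  refine ⟨r.den, r.num, r.pos, hrn, ?_, hr', ?_⟩
  · have := hB.2 r.den (by exact_mod_cast r.pos.ne')
    have h2 := circ_norm_le (((r.den : ℤ) : ℝ) * α) r.num
    push_cast at this h2
    rw [abs_of_pos hq] at this
    have h3 : c ≤ r.den * (1 / (n + 1)) := this.trans (by gcongr; exact h2.trans hr')
    rw [mul_one_div, le_div_iff₀ hn1] at h3
    exact h3
  · have := r.reduced
    rw [Int.isCoprime_iff_gcd_eq_one]
    rw [Int.gcd_comm]
    exact this

/-- Orbits of length `n` are `D/(n+1)`-dense. -/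
theorem orbit_dense (α c : ℝ) (hB : BA α c) (n : ℕ) (hn : 0 < n) (z w : ℝ) :
    ∃ j : ℕ, j < n ∧ ∃ m : ℤ, |z + j * α - w - m| ≤ (1 + 1 / c) / (n + 1) := by
  obtain ⟨q, p, hq0, hqn, hcq, hqp, hcop⟩ := dirichlet_time α c hB n hn
  have hc := hB.1
  have hqR : (0 : ℝ) < q := by exact_mod_cast hq0
  have hn1 : (0 : ℝ) < n + 1 := by positivity
  obtain ⟨a, b, hab⟩ := hcop
  set u := ⌊(w - z) * q⌋ with hu
  set j : ℤ := (b * u) % q with hj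
  have hqZ : (0 : ℤ) < q := by exact_mod_cast hq0
  have hj0 : 0 ≤ j := Int.emod_nonneg _ hqZ.ne'
  have hjq : j < q := Int.emod_lt_of_pos _ hqZ
  obtain ⟨s, hs⟩ : ∃ s : ℤ, j = b * u - q * s := ⟨b * u / q, by
    have := Int.emod_add_mul_ediv (b * u) q; linarith⟩
  have hjp : j * p = u - q * (a * u + s * p) := by
    rw [hs]; linear_combination u * hab
  have hjpR : (j : ℝ) * p = u - q * ((a * u + s * p : ℤ) : ℝ) := by exact_mod_cast hjp
  refine ⟨j.toNat, by omega, -(a * u + s * p), ?_⟩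
  have hjc : ((j.toNat : ℕ) : ℝ) = (j : ℝ) := by
    have : ((j.toNat : ℕ) : ℤ) = j := by omega
    exact_mod_cast this
  rw [hjc]
  have hj0R : (0 : ℝ) ≤ j := by exact_mod_cast hj0
  have hjqR : (j : ℝ) < q := by exact_mod_cast hjq
  have f1 := Int.floor_le ((w - z) * q)
  have f2 := Int.lt_floor_add_one ((w - z) * q)
  rw [← hu] at f1 f2
  have e : z + j * α - w - ((-(a * u + s * p) : ℤ) : ℝ) =
      (j / q) * (q * α - p) + (u - (w - z) * q) / q := by
    push_cast at hjpR ⊢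
    field_simp
    linear_combination hjpR
  rw [e]
  have g1 : |(j / q : ℝ) * (q * α - p)| ≤ 1 / (n + 1) := by
    rw [abs_mul, abs_of_nonneg (by positivity)]
    calc (j / q : ℝ) * |q * α - p| ≤ 1 * |q * α - p| := by
          gcongr; rw [div_le_one hqR]; exact hjqR.le
      _ ≤ _ := by rw [one_mul]; exact hqp
  have g2 : |(u - (w - z) * q) / q| ≤ 1 / c / (n + 1) := by
    rw [abs_div, abs_of_pos hqR]
    have : |u - (w - z) * q| ≤ 1 := by rw [abs_le]; constructor <;> linarith
    calc _ ≤ 1 / (q : ℝ) := by gcongr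
      _ ≤ 1 / (c * (n + 1)) := by gcongr
      _ = _ := by field_simp
  calc _ ≤ _ := abs_add_le _ _
    _ ≤ 1 / (n + 1) + 1 / c / (n + 1) := add_le_add g1 g2
    _ = _ := by ring

open MeasureTheory Filter Set
open scoped ENNReal symmDiff Classical

/-- Separation of the orbits of the marked points `0` and `β`. -/
def SepC (α β c : ℝ) : Prop :=
  0 < c ∧ ∀ k : ℤ, k ≠ 0 → ∀ x₁ x₂ : ℝ, (x₁ = 0 ∨ x₁ = β) → (x₂ = 0 ∨ x₂ = β) →
    c ≤ |(k : ℝ)| * ‖((k * α + x₁ - x₂ : ℝ) : AddCircle (1 : ℝ))‖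

theorem SepC.ba {α β c : ℝ} (h : SepC α β c) : BA α c :=
  ⟨h.1, fun k hk => by simpa using h.2 k hk 0 0 (Or.inl rfl) (Or.inl rfl)⟩

theorem no_int_between (β s : ℝ) (h0 : 0 < β) (h1 : β < 1) (c₁ c₂ : ℝ) (hc₁ : c₁ = 0 ∨ c₁ = β)
    (hc₂ : c₂ = 0 ∨ c₂ = β) (m : ℤ) (hs : s = c₁ - c₂ + m) (hs0 : 0 < s)
    (hs1 : s < min β (1 - β)) : False := by
  rw [lt_min_iff] at hs1
  obtain ⟨a1, a2⟩ := hs1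
  have aux : ∀ m : ℤ, (0 : ℝ) < m → (m : ℝ) < 1 → False := by
    intro m h1 h2
    have h1' : 0 < m := by exact_mod_cast h1
    have h2' : m < 1 := by exact_mod_cast h2
    omega
  rcases hc₁ with rfl | rfl <;> rcases hc₂ with rfl | rfl
  · exact aux m (by linarith) (by linarith)
  · exact aux m (by linarith) (by linarith)
  · exact aux (m + 1) (by push_cast; linarith) (by push_cast; linarith)
  · exact aux m (by linarith) (by linarith)

theorem lr_of_sep (α β c : ℝ) (h0 : 0 < β) (h1 : β < 1) (hS : SepC α β c) : LR' α β := by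
  set c0 := min c (min β (1 - β)) with hc0
  have hc0pos : 0 < c0 := lt_min hS.1 (lt_min h0 (by linarith))
  have hc0c : c0 ≤ c := min_le_left _ _
  have hc0b : c0 ≤ min β (1 - β) := min_le_right _ _
  obtain ⟨P, hP⟩ := exists_nat_gt (4 * (1 + 1 / c) / c0)
  have hcpos := hS.1
  have hPpos : 0 < P := by
    have : (0 : ℝ) < P := lt_trans (by positivity) hP
    exact_mod_cast this
  refine ⟨P + 1, by omega, fun x z m n hmn => ?_⟩
  rcases Nat.eq_zero_or_pos m with rfl | hm
  · exact ⟨0, by omega, fun i hi => by omega⟩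
  have hmR : (1 : ℝ) ≤ m := by exact_mod_cast hm
  set η := c0 / (2 * m) with hη
  have hηpos : 0 < η := by positivity
  have hηm : 2 * η * m = c0 := by rw [hη]; field_simp
  have hdich : (∀ y, x ≤ y → y < x + η → ∀ i < m, FF β (x + i * α) = FF β (y + i * α)) ∨
      (∀ y, x - η < y → y ≤ x → ∀ i < m, FF β (x + i * α) = FF β (y + i * α)) := by
    by_contra hcon
    push Not at hcon
    obtain ⟨⟨y₁, hy1, hy1', i₁, hi1, hne1⟩, y₂, hy2, hy2', i₂, hi2, hne2⟩ := hcon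
    obtain ⟨m₁, c₁, hc1, l1, l2⟩ := FF_cross β _ _ (by linarith) hne1
    obtain ⟨m₂, c₂, hc2, l3, l4⟩ := FF_cross β _ _ (by linarith) hne2.symm
    have p1 : 0 < (((i₂ : ℤ) - i₁ : ℤ) : ℝ) * α + c₁ - c₂ - ((m₂ - m₁ : ℤ) : ℝ) := by
      push_cast; linarith
    have p2 : (((i₂ : ℤ) - i₁ : ℤ) : ℝ) * α + c₁ - c₂ - ((m₂ - m₁ : ℤ) : ℝ) < 2 * η := by
      push_cast; linarith
    by_cases hii : i₁ = i₂
    · subst hii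
      refine no_int_between β _ h0 h1 c₁ c₂ hc1 hc2 (-(m₂ - m₁)) ?_ p1 (lt_of_lt_of_le p2 ?_)
      · push_cast; ring
      · refine le_trans ?_ hc0b
        nlinarith
    · have hk : ((i₂ : ℤ) - i₁ : ℤ) ≠ 0 := by omega
      have q1 := hS.2 _ hk c₁ c₂ hc1 hc2
      have q2 := circ_norm_le ((((i₂ : ℤ) - i₁ : ℤ) : ℝ) * α + c₁ - c₂) (m₂ - m₁)
      rw [abs_of_pos p1] at q2
      have q3 : |((((i₂ : ℤ) - i₁ : ℤ)) : ℝ)| ≤ m := by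
        have h1 : (i₁ : ℝ) ≤ m := by exact_mod_cast hi1.le
        have h2 : (i₂ : ℝ) ≤ m := by exact_mod_cast hi2.le
        push_cast
        rw [abs_le]
        constructor <;> linarith [(Nat.cast_nonneg i₁ : (0 : ℝ) ≤ i₁),
          (Nat.cast_nonneg i₂ : (0 : ℝ) ≤ i₂)]
      have q4 := mul_le_mul q3 q2 (norm_nonneg _) (by linarith)
      nlinarith
  have hdens : ∀ w : ℝ, ∃ j : ℕ, j < P * m ∧ ∃ m' : ℤ, |z + j * α - w - m'| < η / 2 := by
    intro w
    obtain ⟨j, hj, m', hm'⟩ := orbit_dense α c hS.ba (P * m) (by positivity) z w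
    refine ⟨j, hj, m', lt_of_le_of_lt hm' ?_⟩
    rw [div_lt_iff₀ (by positivity)]
    rw [div_lt_iff₀ hc0pos] at hP
    have : η / 2 * ((P * m : ℕ) + 1) = (P * c0) / 4 + η / 2 := by
      rw [hη]; push_cast; field_simp; ring
    rw [this]; linarith
  have hfin : ∀ (j : ℕ) (m' : ℤ) (i : ℕ), FF β (z + j * α - m' + i * α) =
      FF β (z + (j + i : ℕ) * α) := by
    intro j m' i
    rw [← FF_add_int β (z + j * α - m' + i * α) m']
    congr 1; push_cast; ring
  have hPm : P * m + m ≤ n := by rw [add_mul, one_mul] at hmn; exact hmn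
  rcases hdich with hd | hd
  · obtain ⟨j, hj, m', hm'⟩ := hdens (x + η / 2)
    rw [abs_lt] at hm'
    refine ⟨j, by omega, fun i hi => ?_⟩
    rw [← hfin j m' i]
    exact hd _ (by linarith) (by linarith) i hi
  · obtain ⟨j, hj, m', hm'⟩ := hdens (x - η / 2)
    rw [abs_lt] at hm'
    refine ⟨j, by omega, fun i hi => ?_⟩
    rw [← hfin j m' i]
    exact hd _ (by linarith) (by linarith) i hi

theorem sep_of_lr (α β c : ℝ) (h0 : 0 < β) (h1 : β < 1) (hB : BA α c) (hβz : β ∉ ZPlusAlphaZ α)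
    (hL : LR' α β) : ∃ c', SepC α β c' := by
  obtain ⟨K, hK, hL⟩ := hL
  have hc := hB.1
  set b := min β (1 - β) with hb
  have hbpos : 0 < b := lt_min h0 (by linarith)
  set D := 1 + 1 / c with hD
  have hDpos : 0 < D := by positivity
  obtain ⟨L, hLL⟩ := exists_nat_gt (8 * D / b + 4)
  have hL4 : (4 : ℝ) < L := lt_of_le_of_lt (by have : 0 < 8 * D / b := by positivity
                                               linarith) hLL
  have hLD : 8 * D < L * b := by
    have : 8 * D / b < L := by linarith
    rwa [div_lt_iff₀ hbpos] at this
  have hL4' : 4 < L := by exact_mod_cast hL4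
  have hKR : (1 : ℝ) ≤ K := by exact_mod_cast hK
  set ε := min (c / (K * L + 1)) (b / 4) with hε
  have hεpos : 0 < ε := by positivity
  have main : ∀ k : ℕ, 0 < k → ∀ c₁ c₂ : ℝ, (c₁ = 0 ∨ c₁ = β) → (c₂ = 0 ∨ c₂ = β) → c₁ ≠ c₂ →
      ∀ (δ : ℝ) (r : ℤ), c₂ = c₁ + k * α + δ + r → ε / k ≤ |δ| := by
    intro k hk c₁ c₂ hc1 hc2 hne δ r hδ
    by_contra hlt
    push Not at hlt
    have hkR : (1 : ℝ) ≤ k := by exact_mod_cast hk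
    have hδ0 : δ ≠ 0 := by
      rintro rfl
      apply hβz
      rcases hc1 with rfl | rfl <;> rcases hc2 with rfl | rfl
      · exact absurd rfl hne
      · exact ⟨r, k, by push_cast; linarith⟩
      · exact ⟨-r, -k, by push_cast; linarith⟩
      · exact absurd rfl hne
    have hδk : |δ| * k < ε := by rwa [lt_div_iff₀ (by linarith)] at hlt
    have hδb : |δ| < b / 4 := by
      have : ε ≤ b / 4 := min_le_right _ _
      nlinarith [abs_nonneg δ]
    set m := L * k with hm
    have hmR : (m : ℝ) = L * k := by rw [hm]; push_cast; rfl
    set μ := min 0 δ with hμ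
    have hkm : k < m := by rw [hm]; nlinarith
    obtain ⟨j', hj', hw⟩ := hL (c₁ + μ) (c₁ + μ + α) m (K * m) le_rfl
    set j := j' + 1 with hj
    have hw' : ∀ i < m, FF β (c₁ + μ + i * α) = FF β (c₁ + μ + j * α + i * α) := by
      intro i hi
      rw [hw i hi]; congr 1; rw [hj]; push_cast; ring
    obtain ⟨t, s, hts, htn, ht2⟩ := circ_lift (j * α)
    have htb : |t| < b / 2 := by
      by_contra hge
      push Not at hge
      obtain ⟨a, ha⟩ := FF_arc β t h0 h1 ht2
      have hl : b / 2 ≤ min |t| (min β (1 - β)) := le_min hge (by rw [← hb]; linarith)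
      obtain ⟨i, hi, s', hs'⟩ := orbit_dense α c hB m (by omega) (c₁ + μ) (a + b / 4)
      have hsm : (1 + 1 / c) / (m + 1) < b / 4 := by
        rw [div_lt_iff₀ (by positivity), ← hD, hmR]
        nlinarith
      have hs'' := lt_of_le_of_lt hs' hsm
      rw [abs_lt] at hs''
      apply ha (c₁ + μ + i * α - s') (by linarith) (by linarith)
      rw [← FF_add_int β _ s', ← FF_add_int β (_ + t) (s' + s)]
      rw [show c₁ + μ + i * α - s' + s' = c₁ + μ + i * α by ring, hw' i hi]
      congr 1
      rw [hts]; push_cast; ring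
    have hμb : |μ| < b / 4 := by
      rcases min_choice 0 δ with h | h
      · rw [hμ, h, abs_zero]; linarith
      · rw [hμ, h]; exact hδb
    have hμδ : |μ - δ| < b / 4 := by
      rcases min_choice 0 δ with h | h
      · rw [hμ, h, zero_sub, abs_neg]; exact hδb
      · rw [hμ, h, sub_self, abs_zero]; linarith
    have s1 := FF_switch β c₁ μ (μ + t) h0 h1 hc1 (by rw [← hb]; linarith)
      (by rw [← hb]; exact lt_of_le_of_lt (abs_add_le _ _) (by linarith)) (by
        have := hw' 0 (by omega)
        rw [← FF_add_int β (c₁ + (μ + t)) s]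
        rw [hts] at this
        convert this using 2 <;> push_cast <;> ring)
    have s2 := FF_switch β c₂ (μ - δ) (μ - δ + t) h0 h1 hc2 (by rw [← hb]; linarith)
      (by rw [← hb]; exact lt_of_le_of_lt (abs_add_le _ _) (by linarith)) (by
        have := hw' k hkm
        rw [← FF_add_int β _ r, ← FF_add_int β (c₁ + μ + j * α + k * α) r, hts] at this
        rw [← FF_add_int β (c₂ + (μ - δ + t)) s, hδ]
        convert this using 2 <;> ring)
    have hts' : |t| < |δ| := by
      rcases lt_or_gt_of_ne hδ0 with h | h
      · have e : μ = δ := min_eq_right h.le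
        rw [e] at s1 s2
        have a1 : ¬ (0 ≤ δ + t) := fun hh => absurd (s1.2 hh) (by linarith)
        have a2 : 0 ≤ δ - δ + t := s2.1 (by linarith)
        rw [abs_of_neg h, abs_of_nonneg (by linarith)]; linarith
      · have e : μ = 0 := min_eq_left h.le
        rw [e] at s1 s2
        have a1 : 0 ≤ 0 + t := s1.1 le_rfl
        have a2 : ¬ (0 ≤ 0 - δ + t) := fun hh => absurd (s2.2 hh) (by linarith)
        rw [abs_of_pos h, abs_of_nonneg (by linarith)]; linarith
    have hbad := hB.2 j (by omega)
    push_cast at hbad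
    rw [← htn] at hbad
    have hjR : |((j : ℕ) : ℝ)| ≤ K * (L * k) := by
      rw [abs_of_nonneg (by positivity)]
      have : j ≤ K * (L * k) := by rw [← hm]; omega
      exact_mod_cast this
    have e1 : ε * (K * L + 1) ≤ c := by
      have : ε ≤ c / (K * L + 1) := min_le_left _ _
      rwa [le_div_iff₀ (by positivity)] at this
    have e2 : |((j : ℕ) : ℝ)| * |t| ≤ K * (L * k) * |δ| :=
      mul_le_mul hjR hts'.le (abs_nonneg _) (by positivity)
    have e3 : (K : ℝ) * (L * k) * |δ| ≤ K * L * ε := by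
      have : (0 : ℝ) < K * L := by positivity
      calc (K : ℝ) * (L * k) * |δ| = K * L * (|δ| * k) := by ring
        _ ≤ K * L * ε := mul_le_mul_of_nonneg_left hδk.le this.le
    have e4 : (K : ℝ) * L * ε < ε * (K * L + 1) := by
      rw [mul_add, mul_one, mul_comm (K * L : ℝ) ε]; linarith
    linarith
  refine ⟨min ε c, lt_min hεpos hc, fun k hk x₁ x₂ hx1 hx2 => ?_⟩
  by_cases hx : x₁ = x₂
  · subst hx
    refine (min_le_right _ _).trans ?_
    simpa using hB.2 k hk
  refine (min_le_left _ _).trans ?_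
  obtain ⟨t, s, hts, htn, ht2⟩ := circ_lift (k * α + x₁ - x₂)
  rw [← htn]
  have hkpos : (0 : ℝ) < |(k : ℝ)| := abs_pos.2 (by exact_mod_cast hk)
  have hkn : ((k.natAbs : ℕ) : ℝ) = |(k : ℝ)| := by rw [Nat.cast_natAbs]; push_cast; rfl
  rw [mul_comm, ← div_le_iff₀ hkpos, ← hkn]
  rcases lt_or_gt_of_ne hk with h | h
  · have hk' : ((k.natAbs : ℕ) : ℝ) = - k := by
      rw [hkn, abs_of_neg (by exact_mod_cast h)]
    have := main k.natAbs (by omega) x₂ x₁ hx2 hx1 (Ne.symm hx) t s (by rw [hk']; linarith)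
    exact this
  · have hk' : ((k.natAbs : ℕ) : ℝ) = k := by
      rw [hkn, abs_of_pos (by exact_mod_cast h)]
    have := main k.natAbs (by omega) x₁ x₂ hx1 hx2 hx (-t) (-s) (by rw [hk']; push_cast; linarith)
    rwa [abs_neg] at this

open MeasureTheory Filter Set
open scoped ENNReal symmDiff Classical

theorem eq_volume_of_rot_inv (α : ℝ) (hα : Irrational α) (ν : Measure (AddCircle (1 : ℝ)))
    [IsProbabilityMeasure ν] (h : MeasurePreserving (rotMap α) ν ν) : ν = volume := by
  have hd : DenseRange (fun n : ℤ => n • (α : AddCircle (1 : ℝ))) :=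
    AddCircle.denseRange_zsmul_coe_iff.2 (by simpa using hα)
  have hinv : ∀ t : AddCircle (1 : ℝ), ν.map (fun x => t + x) = ν := by
    intro t
    have : IsProbabilityMeasure (ν.map (fun x => t + x)) :=
      Measure.isProbabilityMeasure_map (measurable_const_add t).aemeasurable
    apply ext_of_forall_integral_eq_of_IsFiniteMeasure
    intro g
    rw [integral_map (measurable_const_add t).aemeasurable
      g.continuous.measurable.aestronglyMeasurable]
    set φ : AddCircle (1 : ℝ) → ℝ := fun t => ∫ x, g (t + x) ∂ν with hφ
    have hφc : Continuous φ := by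
      refine continuous_of_dominated (bound := fun _ => ‖g‖) ?_ ?_ ?_ ?_
      · intro s
        exact (g.continuous.comp (continuous_const_add s)).aestronglyMeasurable
      · intro s
        exact Eventually.of_forall fun x => g.norm_coe_le_norm _
      · exact integrable_const _
      · refine Eventually.of_forall fun x => ?_
        exact g.continuous.comp (continuous_add_const x)
    have hstep : ∀ s, φ (s + (α : AddCircle (1 : ℝ))) = φ s := by
      intro s
      have e : ∫ x, g (s + x) ∂ν = ∫ x, g (s + rotMap α x) ∂ν := by
        conv_lhs => rw [← h.map_eq]
        rw [integral_map h.measurable.aemeasurable]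
        exact (g.continuous.comp (continuous_const_add s)).aestronglyMeasurable
      simp only [hφ]
      rw [e]
      refine integral_congr_ae (Eventually.of_forall fun x => ?_)
      simp only [rotMap]
      congr 1; abel
    have hz : ∀ n : ℤ, φ (n • (α : AddCircle (1 : ℝ))) = φ 0 := by
      intro n
      induction n using Int.induction_on with
      | zero => simp
      | succ n ih => rw [add_zsmul, one_zsmul, hstep, ih]
      | pred n ih => rw [← ih, ← hstep, sub_zsmul, one_zsmul, neg_add_cancel_right]
    have hall : φ = fun _ => φ 0 := by
      refine hd.equalizer hφc continuous_const ?_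
      funext n; exact hz n
    have := congrFun hall t
    simp only [hφ] at this
    rw [this]; simp
  have : ν.IsAddLeftInvariant := ⟨hinv⟩
  have hc := Measure.isAddLeftInvariant_eq_smul ν (volume : Measure (AddCircle (1 : ℝ)))
  have hu := congrArg (fun m : Measure (AddCircle (1 : ℝ)) => m univ) hc
  generalize Measure.addHaarScalarFactor ν (volume : Measure (AddCircle (1 : ℝ))) = k at hc hu
  have hu2 : ν univ = (k • (volume : Measure (AddCircle (1 : ℝ)))) univ := hu
  rw [Measure.smul_apply, measure_univ, AddCircle.measure_univ, ENNReal.ofReal_one,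
    ENNReal.smul_def, smul_eq_mul, mul_one] at hu2
  have hk : k = 1 := by exact_mod_cast hu2.symm
  rw [hc, hk, one_smul]

/-- the cocycle on the circle -/
noncomputable def cF (β : ℝ) (z : AddCircle (1 : ℝ)) : ℤ := FF β (circleRepr z)

noncomputable def cS (α β : ℝ) (q : ℕ) (z : AddCircle (1 : ℝ)) : ℤ :=
  ∑ j ∈ Finset.range q, cF β (z + ((j * α : ℝ) : AddCircle (1 : ℝ)))

theorem cF_coe (β x : ℝ) : cF β (x : AddCircle (1 : ℝ)) = FF β x := by
  unfold cF FF
  rw [circleRepr_coe, Int.fract_fract]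

theorem cF_cases (β : ℝ) (z : AddCircle (1 : ℝ)) : cF β z = 0 ∨ cF β z = 1 := FF_cases _ _

theorem measurable_cF (β : ℝ) : Measurable (cF β) := by
  have h1 : Measurable circleRepr :=
    measurable_subtype_coe.comp (AddCircle.measurableEquivIco (1 : ℝ) 0).measurable
  have h2 : Measurable (FF β) := by
    unfold FF
    exact Measurable.ite (measurableSet_lt measurable_fract measurable_const) measurable_const
      measurable_const
  exact h2.comp h1

theorem measurable_cS (α β : ℝ) (q : ℕ) : Measurable (cS α β q) := by
  unfold cS
  exact Finset.measurable_sum _ fun j _ => (measurable_cF β).comp (measurable_add_const _)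

/-- action of parity on the fibre -/
noncomputable def flip2 (n : ℤ) (s : Fin 2) : Fin 2 := if Even n then s else Equiv.swap 0 1 s

theorem flip2_add (m n : ℤ) (s : Fin 2) : flip2 m (flip2 n s) = flip2 (m + n) s := by
  unfold flip2
  by_cases h1 : Even m <;> by_cases h2 : Even n <;> simp [h1, h2, Int.even_add]

theorem flip2_flip2 (m : ℤ) (s : Fin 2) : flip2 m (flip2 m s) = s := by
  rw [flip2_add]; unfold flip2; simp

theorem flip2_eq_iff (m : ℤ) (s : Fin 2) : flip2 m s = s ↔ Even m := by
  unfold flip2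
  by_cases h1 : Even m
  · simp [h1]
  · fin_cases s <;> simp [h1]

/-- abbreviation for the Veech map -/
noncomputable abbrev VT (α β : ℝ) := VST α ![β] ![Equiv.swap (0 : Fin 2) 1, 1]

theorem VT_apply (α β : ℝ) (z : AddCircle (1 : ℝ)) (s : Fin 2) :
    VT α β (z, s) = (z + (α : AddCircle (1 : ℝ)), flip2 (cF β z) s) := by
  have hz : circleRepr z = Int.fract (circleRepr z) := by
    obtain ⟨x, rfl⟩ := QuotientAddGroup.mk_surjective z
    have := circleRepr_coe x
    rw [show (QuotientAddGroup.mk x : AddCircle (1 : ℝ)) = (x : AddCircle (1 : ℝ)) from rfl, this,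
      Int.fract_fract]
  unfold VT VST sigmaOf flip2 cF FF rotMap
  simp only
  rw [← hz, atomIdx_one]
  by_cases h : circleRepr z < β <;> simp [h]

theorem VT_iter (α β : ℝ) (q : ℕ) (z : AddCircle (1 : ℝ)) (s : Fin 2) :
    (VT α β)^[q] (z, s) = (z + ((q * α : ℝ) : AddCircle (1 : ℝ)), flip2 (cS α β q z) s) := by
  induction q with
  | zero => simp [cS, flip2]
  | succ q ih =>
    rw [Function.iterate_succ_apply', ih, VT_apply, flip2_add]
    refine Prod.ext ?_ ?_
    · simp only
      rw [add_assoc, ← AddCircle.coe_add]; congr 2; push_cast; ring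
    · simp only
      congr 1
      unfold cS
      rw [Finset.sum_range_succ, add_comm]

theorem mem_image_iter (α β : ℝ) (q : ℕ) (A : Set (AddCircle (1 : ℝ) × Fin 2))
    (x : AddCircle (1 : ℝ)) (s : Fin 2) :
    (x, s) ∈ (VT α β)^[q] '' A ↔
      (x - ((q * α : ℝ) : AddCircle (1 : ℝ)),
        flip2 (cS α β q (x - ((q * α : ℝ) : AddCircle (1 : ℝ)))) s) ∈ A := by
  constructor
  · rintro ⟨⟨y, u⟩, hA, e⟩
    rw [VT_iter] at e
    obtain ⟨rfl, rfl⟩ := Prod.mk.inj e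
    rw [add_sub_cancel_right, flip2_flip2]
    exact hA
  · intro hA
    refine ⟨_, hA, ?_⟩
    rw [VT_iter, flip2_flip2, sub_add_cancel]

theorem fst_measure (α β : ℝ) (hα : Irrational α) (μ : Measure (AddCircle (1 : ℝ) × Fin 2))
    [IsProbabilityMeasure μ] (h : MeasurePreserving (VT α β) μ μ) (B : Set (AddCircle (1 : ℝ)))
    (hB : MeasurableSet B) : μ (Prod.fst ⁻¹' B) = volume B := by
  have : IsProbabilityMeasure (μ.map Prod.fst) :=
    Measure.isProbabilityMeasure_map measurable_fst.aemeasurable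
  have hm : Measurable (rotMap α) := measurable_add_const _
  have hinv : MeasurePreserving (rotMap α) (μ.map Prod.fst) (μ.map Prod.fst) := by
    refine ⟨hm, ?_⟩
    rw [Measure.map_map hm measurable_fst]
    have : rotMap α ∘ (Prod.fst : AddCircle (1 : ℝ) × Fin 2 → _) = Prod.fst ∘ VT α β := rfl
    rw [this, ← Measure.map_map measurable_fst h.measurable, h.map_eq]
  have := eq_volume_of_rot_inv α hα _ hinv
  rw [← this, Measure.map_apply measurable_fst hB]

theorem rigid_of (α β : ℝ) (hα : Irrational α) (μ : Measure (AddCircle (1 : ℝ) × Fin 2))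
    [IsProbabilityMeasure μ] (h : MeasurePreserving (VT α β) μ μ)
    (q : ℕ → ℕ) (hq : Tendsto q atTop atTop) (Bad : ℕ → Set (AddCircle (1 : ℝ)))
    (hBm : ∀ n, MeasurableSet (Bad n)) (hB0 : Tendsto (fun n => volume (Bad n)) atTop (nhds 0))
    (hBe : ∀ n x, x ∉ Bad n → Even (cS α β (q n) x))
    (hqa : Tendsto (fun n => (((q n : ℕ) * α : ℝ) : AddCircle (1 : ℝ))) atTop (nhds 0)) :
    Rigid (VT α β) μ := by
  refine ⟨q, hq, fun A hA => ?_⟩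
  set t : ℕ → AddCircle (1 : ℝ) := fun n => (((q n : ℕ) * α : ℝ) : AddCircle (1 : ℝ)) with ht
  set As : Fin 2 → Set (AddCircle (1 : ℝ)) := fun s => {x | (x, s) ∈ A} with hAs
  have hAm : ∀ s, MeasurableSet (As s) := fun s => measurable_prodMk_right hA
  have hcont : ∀ s, Tendsto (fun n => volume (((fun x => x - t n) ⁻¹' As s) ∆ As s)) atTop
      (nhds 0) := by
    intro s
    let f : ℕ → C(AddCircle (1 : ℝ), AddCircle (1 : ℝ)) := fun n =>
      ⟨fun x => x - t n, continuous_sub_right (t n)⟩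
    have hf : Tendsto f atTop (nhds (ContinuousMap.id _)) := by
      let F : C(AddCircle (1 : ℝ) × AddCircle (1 : ℝ), AddCircle (1 : ℝ)) :=
        ⟨fun p => p.2 - p.1, continuous_snd.sub continuous_fst⟩
      have h1 : Tendsto (fun n => F.curry (t n)) atTop (nhds (F.curry 0)) :=
        (F.curry.continuous.tendsto 0).comp hqa
      have h2 : F.curry 0 = ContinuousMap.id _ := by ext x; simp [F]
      rw [h2] at h1
      exact h1
    have := tendsto_measure_symmDiff_preimage_nhds_zero (μ := volume) (ν := volume) hf
      (Eventually.of_forall fun n => measurePreserving_sub_right volume (t n))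
      (MeasurePreserving.id _) (hAm s).nullMeasurableSet (measure_ne_top _ _)
    exact this
  have hbd : ∀ n, μ (((VT α β)^[q n] '' A) ∆ A) ≤ volume (Bad n) +
      volume (((fun x => x - t n) ⁻¹' As 0) ∆ As 0) +
      volume (((fun x => x - t n) ⁻¹' As 1) ∆ As 1) := by
    intro n
    have hms : Measurable fun x : AddCircle (1 : ℝ) => x - t n := measurable_sub_const (t n)
    have hpb : volume ((fun x => x - t n) ⁻¹' Bad n) = volume (Bad n) :=
      (measurePreserving_sub_right volume (t n)).measure_preimage (hBm n).nullMeasurableSet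
    rw [← hpb, ← fst_measure α β hα μ h _ (hms (hBm n)),
      ← fst_measure α β hα μ h _ ((hms (hAm 0)).symmDiff (hAm 0)),
      ← fst_measure α β hα μ h _ ((hms (hAm 1)).symmDiff (hAm 1))]
    refine le_trans (measure_mono ?_) ((measure_union_le _ _).trans
      (add_le_add (measure_union_le _ _) le_rfl))
    rintro ⟨x, s⟩ hx
    by_cases hb : x - t n ∈ Bad n
    · exact Or.inl (Or.inl hb)
    · have he := hBe n _ hb
      have hi := mem_image_iter α β (q n) A x s
      rw [(flip2_eq_iff _ s).2 he] at hi
      have hs : x ∈ ((fun x => x - t n) ⁻¹' As s) ∆ As s := by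
        rw [Set.mem_symmDiff] at hx ⊢
        rw [hi] at hx
        exact hx
      fin_cases s
      · exact Or.inl (Or.inr hs)
      · exact Or.inr hs
  refine tendsto_of_tendsto_of_tendsto_of_le_of_le tendsto_const_nhds ?_ (fun n => zero_le) hbd
  simpa using (hB0.add (hcont 0)).add (hcont 1)

/-- consequence of rigidity -/
theorem rigid_conseq (α β : ℝ) (hα : Irrational α) (μ : Measure (AddCircle (1 : ℝ) × Fin 2))
    [IsProbabilityMeasure μ] (h : MeasurePreserving (VT α β) μ μ) (hr : Rigid (VT α β) μ) :
    ∃ q : ℕ → ℕ, Tendsto q atTop atTop ∧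
      Tendsto (fun n => volume {x | ¬ Even (cS α β (q n) x)}) atTop (nhds 0) ∧
      Tendsto (fun n => volume {x | cF β x ≠ cF β (x + ((q n * α : ℝ) : AddCircle (1 : ℝ)))})
        atTop (nhds 0) := by
  obtain ⟨q, hq, hA⟩ := hr
  refine ⟨q, hq, ?_, ?_⟩
  · have := hA (Prod.snd ⁻¹' {0}) (measurable_snd (measurableSet_singleton _))
    refine this.congr fun n => ?_
    set t := ((q n * α : ℝ) : AddCircle (1 : ℝ)) with ht
    have hE : MeasurableSet {x | ¬ Even (cS α β (q n) x)} :=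
      (measurable_cS α β (q n)) (MeasurableSet.of_discrete (s := {m : ℤ | ¬ Even m}))
    rw [← (measurePreserving_sub_right volume t).measure_preimage hE.nullMeasurableSet,
      ← fst_measure α β hα μ h _ (measurable_sub_const t hE)]
    congr 1
    ext ⟨x, s⟩
    rw [Set.mem_symmDiff]
    have := mem_image_iter α β (q n) (Prod.snd ⁻¹' {0}) x s
    rw [this]
    simp only [mem_preimage, mem_singleton_iff, mem_ofPred_eq]
    rw [← ht]
    rw [← flip2_eq_iff _ s]
    generalize flip2 (cS α β (q n) (x - t)) s = u
    fin_cases s <;> fin_cases u <;> simp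
  · have := hA (Prod.fst ⁻¹' {x | cF β x = 1}) (measurable_fst
      ((measurable_cF β) (MeasurableSet.of_discrete (s := {m : ℤ | m = 1}))))
    refine this.congr fun n => ?_
    set t := ((q n * α : ℝ) : AddCircle (1 : ℝ)) with ht
    have hE : MeasurableSet {x | cF β x ≠ cF β (x + t)} := by
      have h1 : MeasurableSet {x | cF β x = cF β (x + t)} :=
        measurableSet_eq_fun (measurable_cF β) ((measurable_cF β).comp (measurable_add_const t))
      exact h1.compl
    rw [← (measurePreserving_sub_right volume t).measure_preimage hE.nullMeasurableSet,
      ← fst_measure α β hα μ h _ (measurable_sub_const t hE)]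
    congr 1
    ext ⟨x, s⟩
    rw [Set.mem_symmDiff]
    have := mem_image_iter α β (q n) (Prod.fst ⁻¹' {x | cF β x = 1}) x s
    rw [this]
    simp only [mem_preimage, mem_ofPred_eq]
    rw [← ht, sub_add_cancel]
    rcases cF_cases β x with h1 | h1 <;> rcases cF_cases β (x - t) with h2 | h2 <;> simp [h1, h2]

open MeasureTheory Filter Set
open scoped ENNReal symmDiff Classical

theorem vol_D_lower (β t : ℝ) (h0 : 0 < β) (h1 : β < 1) :
    ENNReal.ofReal (min ‖(t : AddCircle (1 : ℝ))‖ (min β (1 - β))) ≤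
      volume {x : AddCircle (1 : ℝ) | cF β x ≠ cF β (x + (t : AddCircle (1 : ℝ)))} := by
  obtain ⟨s, m, e, hs, hs2⟩ := circ_lift t
  have hts : (t : AddCircle (1 : ℝ)) = (s : AddCircle (1 : ℝ)) := by
    rw [e]; exact circ_norm_int s m
  rw [hts] at hs ⊢
  rw [← hs]
  obtain ⟨a, ha⟩ := FF_arc β s h0 h1 hs2
  have hE : MeasurableSet {x : AddCircle (1 : ℝ) | cF β x ≠ cF β (x + (s : AddCircle (1 : ℝ)))} := by
    have h1 : MeasurableSet {x : AddCircle (1 : ℝ) | cF β x = cF β (x + (s : AddCircle (1 : ℝ)))} :=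
      measurableSet_eq_fun (measurable_cF β) ((measurable_cF β).comp (measurable_add_const _))
    exact h1.compl
  rw [AddCircle.add_projection_respects_measure (1 : ℝ) a hE]
  set l := min |s| (min β (1 - β)) with hl
  have hl1 : l ≤ 1 / 2 := le_trans (min_le_left _ _) hs2
  calc ENNReal.ofReal l = volume (Ioo a (a + l)) := by rw [Real.volume_Ioo]; congr 1; ring
    _ ≤ _ := by
      apply measure_mono
      rintro x ⟨hx1, hx2⟩
      refine ⟨?_, hx1, by linarith⟩
      have := ha x hx1.le hx2
      change cF β (x : AddCircle (1 : ℝ)) ≠ cF β ((x : AddCircle (1 : ℝ)) + (s : AddCircle (1 : ℝ)))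
      rw [← AddCircle.coe_add, cF_coe, cF_coe]
      exact this

theorem near_of_ne (β t : ℝ) (x : AddCircle (1 : ℝ))
    (h : cF β x ≠ cF β (x + (t : AddCircle (1 : ℝ)))) :
    ∃ c : ℝ, (c = 0 ∨ c = β) ∧ ‖x - (c : AddCircle (1 : ℝ))‖ ≤ ‖(t : AddCircle (1 : ℝ))‖ := by
  obtain ⟨y, rfl⟩ := QuotientAddGroup.mk_surjective x
  obtain ⟨s, m, e, hs, hs2⟩ := circ_lift t
  have hts : (t : AddCircle (1 : ℝ)) = (s : AddCircle (1 : ℝ)) := by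
    rw [e]; exact circ_norm_int s m
  rw [hts] at hs h ⊢
  change cF β (y : AddCircle (1 : ℝ)) ≠ cF β ((y : AddCircle (1 : ℝ)) + (s : AddCircle (1 : ℝ))) at h
  rw [← AddCircle.coe_add, cF_coe, cF_coe] at h
  rw [← hs]
  change ∃ c : ℝ, (c = 0 ∨ c = β) ∧ ‖(y : AddCircle (1 : ℝ)) - (c : AddCircle (1 : ℝ))‖ ≤ |s|
  rcases le_total 0 s with h0 | h0
  · obtain ⟨m, c, hc, h1, h2⟩ := FF_cross β y (y + s) (by linarith) h
    refine ⟨c, hc, ?_⟩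
    rw [← AddCircle.coe_sub]
    refine (circ_norm_le _ m).trans ?_
    rw [abs_of_nonneg h0, abs_le]; constructor <;> linarith
  · obtain ⟨m, c, hc, h1, h2⟩ := FF_cross β (y + s) y (by linarith) h.symm
    refine ⟨c, hc, ?_⟩
    rw [← AddCircle.coe_sub]
    refine (circ_norm_le _ m).trans ?_
    rw [abs_of_nonpos h0, abs_le]; constructor <;> linarith

theorem sum_translates (D E : Set (AddCircle (1 : ℝ))) (hD : MeasurableSet D) (N : ℕ)
    (τ : ℕ → AddCircle (1 : ℝ)) (hE : ∀ j < N, ∀ x, x + τ j ∈ D → x ∈ E)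
    (hdis : ∀ i < N, ∀ j < N, ∀ x, x + τ i ∈ D → x + τ j ∈ D → i = j) :
    (N : ℝ≥0∞) * volume D ≤ volume E := by
  have h1 : volume (⋃ j ∈ Finset.range N, (fun x => x + τ j) ⁻¹' D) =
      ∑ j ∈ Finset.range N, volume ((fun x => x + τ j) ⁻¹' D) := by
    apply measure_biUnion_finset
    · intro i hi j hj hij
      rw [Function.onFun, Set.disjoint_left]
      intro x hx hy
      exact hij (hdis i (by simpa using hi) j (by simpa using hj) x hx hy)
    · intro j _
      exact measurable_add_const _ hD
  have h2 : ∀ j, volume ((fun x => x + τ j) ⁻¹' D) = volume D := fun j =>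
    (measurePreserving_add_right volume (τ j)).measure_preimage hD.nullMeasurableSet
  simp only [h2, Finset.sum_const, Finset.card_range, nsmul_eq_mul] at h1
  rw [← h1]
  apply measure_mono
  intro x hx
  simp only [mem_iUnion] at hx
  obtain ⟨j, hj, hx⟩ := hx
  exact hE j (by simpa using hj) x hx

theorem lower_E (a : AddCircle (1 : ℝ)) (D E : Set (AddCircle (1 : ℝ))) (hD : MeasurableSet D)
    (hE : MeasurableSet E) (N : ℕ)
    (hret : ∀ x ∈ D, ∀ j : ℕ, 0 < j → j ≤ N → x + j • a ∉ D)
    (hflip : ∀ x, x ∉ D → (x + a ∈ E ↔ x ∈ E))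
    (hflip2 : ∀ x, x ∈ D → (x + a ∈ E ↔ x ∉ E)) :
    (N : ℝ≥0∞) * volume D ≤ 2 * volume E := by
  have k1 : ∀ j : ℕ, ∀ x, (∀ i < j, x + i • a ∉ D) → (x + j • a ∈ E ↔ x ∈ E) := by
    intro j
    induction j with
    | zero => intro x _; simp
    | succ j ih =>
      intro x hx
      rw [add_smul, one_smul, ← add_assoc, hflip _ (hx j (by omega)), ih x fun i hi => hx i (by omega)]
  have hr2 : ∀ x, ∀ i j : ℕ, i < j → j ≤ i + N → x + i • a ∈ D → x + j • a ∈ D → False := by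
    intro x i j hij hjN hi hj
    refine hret _ hi (j - i) (by omega) (by omega) ?_
    rwa [add_assoc, ← add_smul, show i + (j - i) = j by omega]
  have a1 : (N : ℝ≥0∞) * volume (D ∩ E) ≤ volume E := by
    refine sum_translates _ _ (hD.inter hE) N (fun j => j • a) ?_ ?_
    · rintro j hj x ⟨hxD, hxE⟩
      refine (k1 j x fun i hi hxi => hr2 x i j hi (by omega) hxi hxD).1 hxE
    · rintro i hi j hj x ⟨h1, -⟩ ⟨h2, -⟩
      rcases lt_trichotomy i j with h | h | h
      · exact (hr2 x i j h (by omega) h1 h2).elim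
      · exact h
      · exact (hr2 x j i h (by omega) h2 h1).elim
  have a2 : (N : ℝ≥0∞) * volume (D \ E) ≤ volume E := by
    refine sum_translates _ _ (hD.diff hE) N (fun j => -((j + 1) • a)) ?_ ?_
    · rintro j hj x ⟨hxD, hxE⟩
      set y := x + -((j + 1) • a) with hy
      have hx : x = (y + a) + j • a := by rw [hy, add_smul, one_smul]; abel
      have h1 : y + a ∈ E := (hflip2 y hxD).2 hxE
      rw [hx]
      refine (k1 j _ fun i hi hxi => ?_).2 h1
      refine hret y hxD (i + 1) (by omega) (by omega) ?_
      rw [add_smul, one_smul]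
      convert hxi using 1; abel
    · have key : ∀ i < N, ∀ j < N, ∀ x, i < j → x + -((i + 1) • a) ∈ D →
          x + -((j + 1) • a) ∈ D → False := by
        intro i hi j hj x hij h1 h2
        refine hret _ h2 (j - i) (by omega) (by omega) ?_
        convert h1 using 1
        obtain ⟨k, rfl⟩ := Nat.exists_eq_add_of_lt hij
        rw [show i + k + 1 - i = k + 1 by omega,
          show i + k + 1 + 1 = (i + 1) + (k + 1) by omega, add_smul (i + 1)]
        abel
      rintro i hi j hj x ⟨h1, -⟩ ⟨h2, -⟩
      rcases lt_trichotomy i j with h | h | h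
      · exact (key i hi j hj x h h1 h2).elim
      · exact h
      · exact (key j hj i hi x h h2 h1).elim
  rw [← measure_inter_add_sdiff D hE, mul_add, two_mul]
  exact add_le_add a1 a2

theorem cS_shift (α β : ℝ) (q : ℕ) (x : AddCircle (1 : ℝ)) :
    cS α β q (x + (α : AddCircle (1 : ℝ))) + cF β x =
      cS α β q x + cF β (x + ((q * α : ℝ) : AddCircle (1 : ℝ))) := by
  have h1 : cS α β (q + 1) x = cS α β q x + cF β (x + ((q * α : ℝ) : AddCircle (1 : ℝ))) := by
    unfold cS; rw [Finset.sum_range_succ]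
  rw [← h1]
  unfold cS
  rw [Finset.sum_range_succ']
  simp only [Nat.cast_zero, zero_mul, AddCircle.coe_zero, add_zero]
  congr 1
  refine Finset.sum_congr rfl fun j _ => ?_
  congr 1
  rw [add_assoc, ← AddCircle.coe_add]; congr 2; push_cast; ring

theorem not_rigid_of_sep (α β c : ℝ) (hα : Irrational α) (h0 : 0 < β) (h1 : β < 1)
    (hS : SepC α β c) (μ : Measure (AddCircle (1 : ℝ) × Fin 2))
    [IsProbabilityMeasure μ] (h : MeasurePreserving (VT α β) μ μ) : ¬ Rigid (VT α β) μ := by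
  intro hr
  obtain ⟨q, hq, hE, hD⟩ := rigid_conseq α β hα μ h hr
  have hc := hS.1
  have hm : 0 < min (min β (1 - β)) (c / 8) := by
    refine lt_min (lt_min h0 (by linarith)) (by linarith)
  have e1 := hE.eventually_lt_const (ENNReal.ofReal_pos.2 (show 0 < c / 16 by linarith))
  have e2 := hD.eventually_lt_const (ENNReal.ofReal_pos.2 hm)
  obtain ⟨n, ⟨g1, g2⟩, g3⟩ := ((e1.and e2).and (hq.eventually_gt_atTop 0)).exists
  set Q := q n with hQ
  set t : ℝ := Q * α with ht
  set θ := ‖(t : AddCircle (1 : ℝ))‖ with hθ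
  set D := {x : AddCircle (1 : ℝ) | cF β x ≠ cF β (x + (t : AddCircle (1 : ℝ)))} with hDdef
  set E := {x : AddCircle (1 : ℝ) | ¬ Even (cS α β Q x)} with hEdef
  have hDm : MeasurableSet D := by
    have h1 : MeasurableSet {x : AddCircle (1 : ℝ) | cF β x = cF β (x + (t : AddCircle (1 : ℝ)))} :=
      measurableSet_eq_fun (measurable_cF β) ((measurable_cF β).comp (measurable_add_const _))
    exact h1.compl
  have hEm : MeasurableSet E :=
    (measurable_cS α β Q) (MeasurableSet.of_discrete (s := {m : ℤ | ¬ Even m}))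
  have hlow := vol_D_lower β t h0 h1
  have hlt : min θ (min β (1 - β)) < min (min β (1 - β)) (c / 8) := by
    exact (ENNReal.ofReal_lt_ofReal_iff hm).1 (lt_of_le_of_lt hlow g2)
  have hθ1 : θ < min β (1 - β) := by
    by_contra hcon
    rw [min_eq_right (not_lt.1 hcon)] at hlt
    exact absurd hlt (not_lt.2 (min_le_left _ _))
  have hθ2 : θ < c / 8 := by
    rw [min_eq_left hθ1.le] at hlt
    exact lt_of_lt_of_le hlt (min_le_right _ _)
  have hθ0 : 0 < θ := by
    have := hS.2 Q (by exact_mod_cast g3.ne') 0 0 (Or.inl rfl) (Or.inl rfl)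
    simp only [add_zero, sub_zero, Int.cast_natCast] at this
    have h3 : (0:ℝ) < |(Q:ℝ)| * θ := lt_of_lt_of_le hc this
    exact pos_of_mul_pos_right h3 (abs_nonneg _)
  set N := ⌊c / (4 * θ)⌋₊ with hN
  have hNle : (N : ℝ) * (4 * θ) ≤ c := by
    have := Nat.floor_le (show 0 ≤ c / (4 * θ) by positivity)
    rwa [le_div_iff₀ (by positivity)] at this
  have hNge : c < (N + 1 : ℝ) * (4 * θ) := by
    have := Nat.lt_floor_add_one (c / (4 * θ))
    rwa [div_lt_iff₀ (by positivity)] at this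
  have hfin := lower_E (α : AddCircle (1 : ℝ)) D E hDm hEm N ?_ ?_ ?_
  · rw [min_eq_left hθ1.le] at hlow
    have h5 : ENNReal.ofReal (N * θ) ≤ 2 * volume E := by
      rw [ENNReal.ofReal_mul (by positivity), ENNReal.ofReal_natCast]
      exact (mul_le_mul_right hlow _).trans hfin
    have h6 : 2 * volume E < ENNReal.ofReal (c / 8) := by
      have : ENNReal.ofReal (c / 8) = 2 * ENNReal.ofReal (c / 16) := by
        rw [show (2 : ℝ≥0∞) = ENNReal.ofReal 2 by simp, ← ENNReal.ofReal_mul (by norm_num)]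
        congr 1; ring
      rw [this]
      exact ENNReal.mul_lt_mul_right (by simp) (by simp) g1
    have h7 := (ENNReal.ofReal_lt_ofReal_iff (by positivity)).1 (lt_of_le_of_lt h5 h6)
    nlinarith
  · intro x hx j hj hjN hxj
    obtain ⟨c1, hc1, n1⟩ := near_of_ne β t x hx
    obtain ⟨c2, hc2, n2⟩ := near_of_ne β t _ hxj
    have := hS.2 j (by exact_mod_cast hj.ne') c1 c2 hc1 hc2
    have e : ((((j : ℤ) : ℝ) * α + c1 - c2 : ℝ) : AddCircle (1 : ℝ)) =
        (x + j • (α : AddCircle (1 : ℝ)) - (c2 : AddCircle (1 : ℝ))) - (x - (c1 : AddCircle (1 : ℝ))) := by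
      rw [AddCircle.coe_sub, AddCircle.coe_add, ← AddCircle.coe_nsmul]
      simp only [nsmul_eq_mul, Int.cast_natCast]
      abel
    have h3 := norm_sub_le (x + j • (α : AddCircle (1 : ℝ)) - (c2 : AddCircle (1 : ℝ)))
      (x - (c1 : AddCircle (1 : ℝ)))
    rw [← e] at h3
    have h4 : |(((j : ℤ)) : ℝ)| ≤ N := by
      rw [Int.cast_natCast, abs_of_nonneg (by positivity)]; exact_mod_cast hjN
    have h5 : c ≤ N * (2 * θ) := this.trans
      (mul_le_mul h4 (by linarith) (norm_nonneg _) (by positivity))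
    linarith
  · intro x hx
    have hx2 : cF β x = cF β (x + (t : AddCircle (1 : ℝ))) := not_not.1 hx
    have := cS_shift α β Q x
    rw [← ht, ← hx2] at this
    change ¬ Even _ ↔ ¬ Even _
    rw [add_right_cancel this]
  · intro x hx
    have hx2 : cF β x ≠ cF β (x + (t : AddCircle (1 : ℝ))) := hx
    have := cS_shift α β Q x
    rw [← ht] at this
    change ¬ Even _ ↔ ¬ ¬ Even _
    rw [Int.even_iff, Int.even_iff]
    rcases cF_cases β x with u | u <;> rcases cF_cases β (x + (t : AddCircle (1 : ℝ))) with v | v <;>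
      rw [u, v] at this hx2 <;> omega

open MeasureTheory Filter Set
open scoped ENNReal symmDiff Classical

theorem fract_add_small (y d : ℝ) (h : |d| < ‖(y : AddCircle (1 : ℝ))‖) :
    Int.fract (y + d) = Int.fract y + d := by
  have h1 := circ_norm_le y ⌊y⌋
  have h2 := circ_norm_le y (⌊y⌋ + 1)
  push_cast at h2
  have h3 : y - ⌊y⌋ = Int.fract y := rfl
  have h4 := Int.fract_nonneg y
  have h5 := Int.fract_lt_one y
  rw [h3, abs_of_nonneg h4] at h1
  rw [show y - (⌊y⌋ + 1) = -(1 - Int.fract y) by rw [← h3]; ring, abs_neg,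
    abs_of_nonneg (by linarith)] at h2
  have h6 := abs_lt.1 (lt_of_lt_of_le h h1)
  have h7 := abs_lt.1 (lt_of_lt_of_le h h2)
  rw [Int.fract_eq_iff]
  exact ⟨by linarith, by linarith, ⌊y⌋, by rw [← h3]; ring⟩

theorem FF_formula (β x : ℝ) (h0 : 0 < β) (h1 : β < 1) :
    (FF β x : ℝ) = β + Int.fract (x - β) - Int.fract x := by
  have h4 := Int.fract_nonneg x
  have h5 := Int.fract_lt_one x
  have h3 : x - ⌊x⌋ = Int.fract x := rfl
  unfold FF
  split_ifs with h
  · have : Int.fract (x - β) = Int.fract x - β + 1 := by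
      rw [Int.fract_eq_iff]
      exact ⟨by linarith, by linarith, ⌊x⌋ - 1, by push_cast; rw [← h3]; ring⟩
    rw [this]; push_cast; ring
  · have : Int.fract (x - β) = Int.fract x - β := by
      rw [Int.fract_eq_iff]
      exact ⟨by linarith, by linarith, ⌊x⌋, by rw [← h3]; ring⟩
    rw [this]; push_cast; ring

/-- Birkhoff sums of the fractional part -/
noncomputable def GG (α : ℝ) (Q : ℕ) (x : ℝ) : ℝ := ∑ j ∈ Finset.range Q, Int.fract (x + j * α)

theorem GG_step (α : ℝ) (Q : ℕ) (P : ℤ) (y : ℝ)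
    (h : |Q * α - P| < ‖(y : AddCircle (1 : ℝ))‖) :
    GG α Q (y + α) = GG α Q y + (Q * α - P) := by
  have h1 : GG α (Q + 1) y = GG α Q y + Int.fract (y + Q * α) := by
    unfold GG; rw [Finset.sum_range_succ]
  have h2 : GG α (Q + 1) y = GG α Q (y + α) + Int.fract y := by
    unfold GG; rw [Finset.sum_range_succ']
    simp only [Nat.cast_zero, zero_mul, add_zero]
    congr 1
    refine Finset.sum_congr rfl fun j _ => ?_
    congr 1; push_cast; ring
  have h3 := fract_add_small y _ h
  have h4 : Int.fract (y + Q * α) = Int.fract (y + (Q * α - P)) := by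
    rw [← Int.fract_add_intCast (y + (Q * α - P)) P]; congr 1; ring
  rw [h4, h3] at h1
  linarith

theorem GG_steps (α : ℝ) (Q : ℕ) (P : ℤ) (k : ℕ) (y : ℝ)
    (h : ∀ i < k, |Q * α - P| < ‖((y + i * α : ℝ) : AddCircle (1 : ℝ))‖) :
    GG α Q (y + k * α) = GG α Q y + k * (Q * α - P) := by
  induction k with
  | zero => simp
  | succ k ih =>
    have h1 := GG_step α Q P (y + k * α) (h k (by omega))
    rw [ih fun i hi => h i (by omega)] at h1
    rw [show y + ((k + 1 : ℕ) : ℝ) * α = y + k * α + α by push_cast; ring, h1]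
    push_cast; ring

theorem cS_const (α β δ : ℝ) (h0 : 0 < β) (h1 : β < 1) (k m P : ℤ) (Q : ℕ)
    (hβ : β = k * α + δ + m) (x : ℝ)
    (g1 : ∀ i : ℤ, |i| ≤ |k| → |Q * α - P| < ‖((x + i * α : ℝ) : AddCircle (1 : ℝ))‖)
    (g2 : ∀ j : ℕ, j < Q → |δ| < ‖((x + ((j : ℤ) - k : ℤ) * α : ℝ) : AddCircle (1 : ℝ))‖) :
    (cS α β Q (x : AddCircle (1 : ℝ)) : ℝ) = Q * β - Q * δ - k * (Q * α - P) := by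
  have e1 : (cS α β Q (x : AddCircle (1 : ℝ)) : ℝ) =
      Q * β - Q * δ + GG α Q (x - k * α) - GG α Q x := by
    unfold cS GG
    push_cast
    rw [add_sub_assoc, ← Finset.sum_sub_distrib]
    have : (Q : ℝ) * β - Q * δ = ∑ j ∈ Finset.range Q, (β - δ) := by
      rw [Finset.sum_const, Finset.card_range, nsmul_eq_mul]; ring
    rw [this, ← Finset.sum_add_distrib]
    refine Finset.sum_congr rfl fun j hj => ?_
    rw [← AddCircle.coe_add, cF_coe, FF_formula β _ h0 h1]
    have h3 := fract_add_small (x + ((j : ℤ) - k : ℤ) * α) (-δ)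
      (by rw [abs_neg]; exact g2 j (by simpa using hj))
    have h4 : Int.fract (x + j * α - β) = Int.fract (x + ((j : ℤ) - k : ℤ) * α + -δ) := by
      rw [← Int.fract_add_intCast (x + j * α - β) m]; congr 1; rw [hβ]; push_cast; ring
    rw [h4, h3]
    rw [show x - k * α + j * α = x + ((j : ℤ) - k : ℤ) * α by push_cast; ring]
    ring
  rw [e1]
  have e2 : GG α Q (x - k * α) = GG α Q x - k * (Q * α - P) := by
    obtain ⟨n, hn | hn⟩ := Int.eq_nat_or_neg k
    · have := GG_steps α Q P n (x - k * α) ?_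
      · rw [hn] at this ⊢
        push_cast at this ⊢
        rw [show x - n * α + n * α = x by ring] at this
        linarith
      · intro i hi
        have := g1 (i - k) (by rw [hn, abs_le]; simp; omega)
        rwa [show x + ((i - k : ℤ) : ℝ) * α = x - k * α + i * α by push_cast; ring] at this
    · have := GG_steps α Q P n x ?_
      · rw [hn]
        push_cast
        rw [show x - -n * α = x + n * α by ring, this]; ring
      · intro i hi
        have := g1 i (by rw [hn, abs_le]; simp; omega)
        exact_mod_cast this
  rw [e2]; ring

theorem cS_add (α β : ℝ) (p q : ℕ) (x : AddCircle (1 : ℝ)) :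
    cS α β (p + q) x = cS α β p x + cS α β q (x + ((p * α : ℝ) : AddCircle (1 : ℝ))) := by
  unfold cS
  rw [Finset.sum_range_add]
  congr 1
  refine Finset.sum_congr rfl fun j _ => ?_
  congr 1
  rw [add_assoc, ← AddCircle.coe_add]; congr 2; push_cast; ring

theorem close_k (α β c : ℝ) (hB : BA α c) (hns : ¬ ∃ c', SepC α β c') (ε : ℝ) (hε : 0 < ε) :
    ∃ k m : ℤ, ∃ δ : ℝ, k ≠ 0 ∧ β = k * α + δ + m ∧ |(k : ℝ)| * |δ| < ε := by
  have h1 : ¬ SepC α β (min c ε) := fun h => hns ⟨_, h⟩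
  unfold SepC at h1
  push Not at h1
  obtain ⟨k, hk, x₁, x₂, hx1, hx2, h2⟩ := h1 (lt_min hB.1 hε)
  have key : ∃ k : ℤ, k ≠ 0 ∧ |(k : ℝ)| * ‖((k * α - β : ℝ) : AddCircle (1 : ℝ))‖ < ε := by
    have h3 := lt_of_lt_of_le h2 (min_le_right _ _)
    have h4 := lt_of_lt_of_le h2 (min_le_left _ _)
    have h5 := hB.2 k hk
    rcases hx1 with rfl | rfl <;> rcases hx2 with rfl | rfl
    · simp only [add_zero, sub_zero] at h4; linarith
    · exact ⟨k, hk, by simpa using h3⟩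
    · refine ⟨-k, by simpa using hk, ?_⟩
      rw [← norm_neg, ← AddCircle.coe_neg]
      push_cast
      rw [abs_neg, show -(-(k : ℝ) * α - x₁) = k * α + x₁ - 0 by ring]
      exact h3
    · simp only [add_sub_cancel_right] at h4; linarith
  obtain ⟨k, hk, h3⟩ := key
  obtain ⟨t, m, e, ht, -⟩ := circ_lift (k * α - β)
  refine ⟨k, -m, -t, hk, by push_cast; linarith, ?_⟩
  rw [abs_neg, ht]; exact h3

theorem rigid_step (α β c : ℝ) (h0 : 0 < β) (h1 : β < 1) (hB : BA α c)
    (hns : ¬ ∃ c', SepC α β c') (s : ℕ) (hs : 0 < s) :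
    ∃ Q : ℕ, ∃ Bad : Set (AddCircle (1 : ℝ)), MeasurableSet Bad ∧
      volume Bad ≤ ENNReal.ofReal (16 / s) ∧ (∀ x, x ∉ Bad → Even (cS α β (2 * Q) x)) ∧
      c * s ≤ Q ∧ ‖((Q * α : ℝ) : AddCircle (1 : ℝ))‖ ≤ 1 / s := by
  have hsR : (0 : ℝ) < s := by exact_mod_cast hs
  obtain ⟨k, m, δ, hk, hβ, hδ⟩ := close_k α β c hB hns (1 / (s : ℝ) ^ 2) (by positivity)
  set K := k.natAbs with hK
  have hK0 : 0 < K := Int.natAbs_pos.2 hk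
  have hKR : (1 : ℝ) ≤ K := by exact_mod_cast hK0
  have hKk : |(k : ℝ)| = K := by rw [hK, Nat.cast_natAbs]; push_cast; rfl
  obtain ⟨Q, P, hQ0, hQn, hcQ, hθ, -⟩ := dirichlet_time α c hB (K * s) (by positivity)
  set θ := |(Q : ℝ) * α - P| with hθd
  push_cast at hcQ hθ
  have hQR : (Q : ℝ) ≤ K * s := by exact_mod_cast hQn
  have hc := hB.1
  have hKs : (s : ℝ) ≤ K * s := by nlinarith
  set B1 := ⋃ i ∈ Finset.Icc (-(K : ℤ)) K,
    Metric.closedBall ((-(i * α) : ℝ) : AddCircle (1 : ℝ)) θ with hB1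
  set B2 := ⋃ j ∈ Finset.range Q,
    Metric.closedBall ((-(((j : ℤ) - k : ℤ) * α) : ℝ) : AddCircle (1 : ℝ)) |δ| with hB2
  have m1 : MeasurableSet B1 := Finset.measurableSet_biUnion _ fun i _ => Metric.isClosed_closedBall.measurableSet
  have m2 : MeasurableSet B2 := Finset.measurableSet_biUnion _ fun i _ => Metric.isClosed_closedBall.measurableSet
  have hball : ∀ (z : AddCircle (1 : ℝ)) (r : ℝ), volume (Metric.closedBall z r) ≤ ENNReal.ofReal (2 * r) := by
    intro z r
    rw [AddCircle.volume_closedBall]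
    exact ENNReal.ofReal_le_ofReal (min_le_right _ _)
  have v1 : volume B1 ≤ ENNReal.ofReal (6 / s) := by
    calc volume B1 ≤ ∑ i ∈ Finset.Icc (-(K : ℤ)) K, volume (Metric.closedBall ((-(i * α) : ℝ) : AddCircle (1 : ℝ)) θ) :=
          measure_biUnion_finset_le _ _
      _ ≤ ∑ i ∈ Finset.Icc (-(K : ℤ)) K, ENNReal.ofReal (2 * θ) := Finset.sum_le_sum fun i _ => hball _ _
      _ = ENNReal.ofReal ((2 * K + 1 : ℕ) * (2 * θ)) := by
          rw [Finset.sum_const, nsmul_eq_mul, Int.card_Icc,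
            ENNReal.ofReal_mul (p := ((2 * K + 1 : ℕ) : ℝ)) (by positivity),
            ENNReal.ofReal_natCast]
          congr 2; omega
      _ ≤ ENNReal.ofReal (6 / s) := by
          apply ENNReal.ofReal_le_ofReal
          have : θ ≤ 1 / (K * s) := hθ.trans (one_div_le_one_div_of_le (by positivity) (by linarith))
          have h3 : ((2 * K + 1 : ℕ) : ℝ) ≤ 3 * K := by push_cast; linarith
          calc ((2 * K + 1 : ℕ) : ℝ) * (2 * θ) ≤ (3 * K) * (2 * (1 / (K * s))) := by gcongr
            _ = 6 / s := by field_simp; norm_num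
  have v2 : volume B2 ≤ ENNReal.ofReal (2 / s) := by
    calc volume B2 ≤ ∑ j ∈ Finset.range Q, volume (Metric.closedBall ((-(((j : ℤ) - k : ℤ) * α) : ℝ) : AddCircle (1 : ℝ)) |δ|) :=
          measure_biUnion_finset_le _ _
      _ ≤ ∑ j ∈ Finset.range Q, ENNReal.ofReal (2 * |δ|) := Finset.sum_le_sum fun i _ => hball _ _
      _ = ENNReal.ofReal (Q * (2 * |δ|)) := by
          rw [Finset.sum_const, nsmul_eq_mul, Finset.card_range,
            ENNReal.ofReal_mul (p := (Q : ℝ)) (by positivity),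
            ENNReal.ofReal_natCast]
      _ ≤ ENNReal.ofReal (2 / s) := by
          apply ENNReal.ofReal_le_ofReal
          rw [hKk] at hδ
          calc (Q : ℝ) * (2 * |δ|) ≤ (K * s) * (2 * |δ|) := by gcongr
            _ = 2 * s * (K * |δ|) := by ring
            _ ≤ 2 * s * (1 / (s : ℝ) ^ 2) := by gcongr
            _ = 2 / s := by field_simp
  have v3 : volume (B1 ∪ B2) ≤ ENNReal.ofReal (8 / s) := by
    refine (measure_union_le _ _).trans ((add_le_add v1 v2).trans ?_)
    rw [← ENNReal.ofReal_add (by positivity) (by positivity)]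
    apply ENNReal.ofReal_le_ofReal
    rw [← add_div]; norm_num
  have hgood : ∀ x : AddCircle (1 : ℝ), x ∉ B1 ∪ B2 →
      (cS α β Q x : ℝ) = Q * β - Q * δ - k * (Q * α - P) := by
    intro x hx
    obtain ⟨y, rfl⟩ := QuotientAddGroup.mk_surjective x
    rw [mem_union, not_or] at hx
    obtain ⟨hx1, hx2⟩ := hx
    simp only [hB1, hB2, mem_iUnion, not_exists, Metric.mem_closedBall, not_le, dist_eq_norm] at hx1 hx2
    refine cS_const α β δ h0 h1 k m P Q hβ y ?_ ?_
    · intro i hi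
      have := hx1 i (by rw [Finset.mem_Icc, ← abs_le, hK, Int.natCast_natAbs]; exact hi)
      have e : ((y + i * α : ℝ) : AddCircle (1 : ℝ)) =
          (y : AddCircle (1 : ℝ)) - ((-(i * α) : ℝ) : AddCircle (1 : ℝ)) := by
        rw [← AddCircle.coe_sub]; congr 1; ring
      rw [e]; exact this
    · intro j hj
      have := hx2 j (by simpa using hj)
      have e : ((y + ((j : ℤ) - k : ℤ) * α : ℝ) : AddCircle (1 : ℝ)) =
          (y : AddCircle (1 : ℝ)) - ((-(((j : ℤ) - k : ℤ) * α) : ℝ) : AddCircle (1 : ℝ)) := by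
        rw [← AddCircle.coe_sub]; congr 1; ring
      rw [e]; exact this
  set τ := ((Q * α : ℝ) : AddCircle (1 : ℝ)) with hτ
  refine ⟨Q, (B1 ∪ B2) ∪ (fun x => x + τ) ⁻¹' (B1 ∪ B2), (m1.union m2).union
    (measurable_add_const _ (m1.union m2)), ?_, ?_, ?_, ?_⟩
  · refine (measure_union_le _ _).trans ?_
    rw [(measurePreserving_add_right volume τ).measure_preimage (m1.union m2).nullMeasurableSet]
    refine (add_le_add v3 v3).trans ?_
    rw [← ENNReal.ofReal_add (by positivity) (by positivity)]
    apply ENNReal.ofReal_le_ofReal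
    rw [← add_div]; norm_num
  · intro x hx
    rw [mem_union, not_or] at hx
    have e1 := hgood x hx.1
    have e2 := hgood (x + τ) hx.2
    rw [two_mul, cS_add]
    have : cS α β Q x = cS α β Q (x + τ) := by exact_mod_cast e1.trans e2.symm
    rw [← hτ, ← this]
    exact ⟨_, rfl⟩
  · nlinarith
  · refine (circ_norm_le _ P).trans (hθ.trans (one_div_le_one_div_of_le hsR (by linarith)))

theorem rigid_of_not_sep (α β c : ℝ) (hα : Irrational α) (h0 : 0 < β) (h1 : β < 1) (hB : BA α c)
    (hns : ¬ ∃ c', SepC α β c') (μ : Measure (AddCircle (1 : ℝ) × Fin 2))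
    [IsProbabilityMeasure μ] (h : MeasurePreserving (VT α β) μ μ) : Rigid (VT α β) μ := by
  choose Q Bad hm hv he hQ hn using fun n : ℕ => rigid_step α β c h0 h1 hB hns (n + 1) (by omega)
  have hc := hB.1
  have hlim : ∀ C : ℝ, Tendsto (fun n : ℕ => C / ((n + 1 : ℕ) : ℝ)) atTop (nhds 0) := fun C =>
    (tendsto_const_div_atTop_nhds_zero_nat C).comp (tendsto_add_atTop_nat 1)
  refine rigid_of α β hα μ h (fun n => 2 * Q n) ?_ Bad hm ?_ he ?_
  · have h2 : Tendsto (fun n : ℕ => ((Q n : ℕ) : ℝ)) atTop atTop := by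
      refine tendsto_atTop_mono hQ ?_
      exact Tendsto.const_mul_atTop hc
        (tendsto_natCast_atTop_atTop.comp (tendsto_add_atTop_nat 1))
    have h3 := tendsto_natCast_atTop_iff.1 h2
    exact tendsto_atTop_mono (fun n => by omega) h3
  · refine tendsto_of_tendsto_of_tendsto_of_le_of_le tendsto_const_nhds ?_ (fun n => zero_le) hv
    have := ENNReal.tendsto_ofReal (hlim 16)
    simpa using this
  · rw [tendsto_zero_iff_norm_tendsto_zero]
    refine squeeze_zero (fun n => norm_nonneg _) (fun n => ?_) (hlim 2)
    have e : (((2 * Q n : ℕ) * α : ℝ) : AddCircle (1 : ℝ)) =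
        ((Q n * α : ℝ) : AddCircle (1 : ℝ)) + ((Q n * α : ℝ) : AddCircle (1 : ℝ)) := by
      rw [← AddCircle.coe_add]; congr 1; push_cast; ring
    rw [e]
    refine (norm_add_le _ _).trans ((add_le_add (hn n) (hn n)).trans (le_of_eq ?_))
    rw [← add_div]; norm_num

theorem stmt_16 (α : ℝ) (hα : Irrational α) (hα0 : 0 < α) (hα1 : α < 1)
    (hbpq : BoundedPartialQuotients α)
    (β : ℝ) (hβirr : Irrational β) (hβ0 : 0 < β) (hβ1 : β < 1)
    (hβz : β ∉ ZPlusAlphaZ α) :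
    (LinearlyRecurrent (LRot α ![β]) →
      ∀ μ : Measure (AddCircle (1 : ℝ) × Fin 2), IsProbabilityMeasure μ →
        Ergodic (VST α ![β] ![Equiv.swap (0 : Fin 2) 1, 1]) μ →
          ¬ Rigid (VST α ![β] ![Equiv.swap (0 : Fin 2) 1, 1]) μ) ∧
    (¬ LinearlyRecurrent (LRot α ![β]) →
      ∀ μ : Measure (AddCircle (1 : ℝ) × Fin 2), IsProbabilityMeasure μ →
        MeasurePreserving (VST α ![β] ![Equiv.swap (0 : Fin 2) 1, 1]) μ μ →
          Rigid (VST α ![β] ![Equiv.swap (0 : Fin 2) 1, 1]) μ) := by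
  obtain ⟨c, hB⟩ := ba_of_bpq α hα hα0 hα1 hbpq
  constructor
  · intro hL μ hμ hE
    obtain ⟨c', hS⟩ := sep_of_lr α β c hβ0 hβ1 hB hβz ((lr_iff α β).1 hL)
    exact not_rigid_of_sep α β c' hα hβ0 hβ1 hS μ hE.toMeasurePreserving
  · intro hL μ hμ hT
    refine rigid_of_not_sep α β c hα hβ0 hβ1 hB ?_ μ hT
    rintro ⟨c', hS⟩
    exact hL ((lr_iff α β).2 (lr_of_sep α β c' hβ0 hβ1 hS))
end
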